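/- Let S be a class of classifiers on ℝ^d with finite VC dimension V, satisfying the separability assumption: there exists a countable subset S' ⊆ S such that for every g ∈ S there is a sequence (g_k) in S' with r_SAR(g_k,(x,s)) → r_SAR(g,(x,s)) for every (x,s) ∈ ℝ^d × {0,1}. Assume the Bayes classifier g* belongs to S, the Massart noise condition holds: there exists h > 0 with |2η(x) − 1| ≥ h for all x ∈ ℝ^d, and the propensity satisfies e(x) ≥ e_m > 0 for all x. Let ĝ_PU be any minimizer over S of the empirical SAR risk R̂_n^SAR based on an i.i.d. sample (X_1,S_1),…,(X_n,S_n). Then there exists an absolute constant κ₁ > 0 such that E[ℓ(ĝ_PU, g*)] ≤ κ₁ · min{ (V/(n·e_m·h))·(1 + log(max(n·h²/V, 1))), √(V/(n·e_m)) }. -/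

import Mathlib

open MeasureTheory ProbabilityTheory Real Filter Topology

noncomputable section

/-- A classifier: a measurable `{0,1}`-valued function on the feature space. -/
def IsClassifier {α : Type*} [MeasurableSpace α] (g : α → ℝ) : Prop :=
  Measurable g ∧ ∀ x, g x = 0 ∨ g x = 1

/-- `η` is a version of the regression function `x ↦ P(Y = 1 ∣ X = x)`. -/
def IsRegression {Ω α : Type*} [MeasurableSpace Ω] [MeasurableSpace α]
    (P : Measure Ω) (X : Ω → α) (Y : Ω → ℝ) (η : α → ℝ) : Prop :=
  Measurable η ∧ (∀ x, 0 ≤ η x ∧ η x ≤ 1) ∧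
    ∀ A : Set α, MeasurableSet A →
      ∫ ω in X ⁻¹' A, Y ω ∂P = ∫ ω in X ⁻¹' A, η (X ω) ∂P

/-- `e` is the propensity: `P(S = 1 ∣ Y = 1, X = x) = e x` and
`P(S = 1 ∣ Y = 0, X = x) = 0` (the latter is equivalent to `S ≤ Y` a.s.). -/
def IsPropensity {Ω α : Type*} [MeasurableSpace Ω] [MeasurableSpace α]
    (P : Measure Ω) (X : Ω → α) (Y S : Ω → ℝ) (e : α → ℝ) : Prop :=
  Measurable e ∧ (∀ x, 0 ≤ e x ∧ e x ≤ 1) ∧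
    (∀ᵐ ω ∂P, S ω ≤ Y ω) ∧
    ∀ A : Set α, MeasurableSet A →
      ∫ ω in X ⁻¹' A, S ω ∂P = ∫ ω in X ⁻¹' A, e (X ω) * Y ω ∂P

/-- Misclassification risk `R(g) = P(g(X) ≠ Y)`. -/
def risk {Ω α : Type*} [MeasurableSpace Ω]
    (P : Measure Ω) (X : Ω → α) (Y : Ω → ℝ) (g : α → ℝ) : ℝ :=
  (P {ω | g (X ω) ≠ Y ω}).toReal

/-- The Bayes classifier `g*(x) = 1{η(x) ≥ 1/2}`. -/
def bayes {α : Type*} (η : α → ℝ) : α → ℝ := fun x => if (1 : ℝ) / 2 ≤ η x then 1 else 0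

/-- Excess risk `ℓ(g, g*) = R(g) − R(g*)`. -/
def excessRisk {Ω α : Type*} [MeasurableSpace Ω]
    (P : Measure Ω) (X : Ω → α) (Y : Ω → ℝ) (η : α → ℝ) (g : α → ℝ) : ℝ :=
  risk P X Y g - risk P X Y (bayes η)

/-- The SAR loss `r_SAR(g,(x,s)) = (1{s=1}/e(x))·(2·1{g(x)≠1} − 1) + 1{g(x)≠0}`. -/
def rSAR {α : Type*} (e : α → ℝ) (g : α → ℝ) (p : α × ℝ) : ℝ :=
  (if p.2 = 1 then (1 : ℝ) else 0) / e p.1 * (2 * (if g p.1 ≠ 1 then (1 : ℝ) else 0) - 1)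
    + (if g p.1 ≠ 0 then (1 : ℝ) else 0)

/-- Empirical risk `(1/n)·Σ_{i=1}^n r(g,(X_i,S_i))` of a generic loss `r` on an `n`-sample. -/
def empRisk {Ω α : Type*} (r : (α → ℝ) → α × ℝ → ℝ) (X : Ω → α) (S : Ω → ℝ) (n : ℕ)
    (g : α → ℝ) (ω : Fin n → Ω) : ℝ :=
  (1 / (n : ℝ)) * ∑ i : Fin n, r g (X (ω i), S (ω i))

/-- A finite set of points is shattered by the class `𝒮`: every labeling is realized. -/
def Shatters {α : Type*} (𝒮 : Set (α → ℝ)) {k : ℕ} (x : Fin k → α) : Prop :=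
  ∀ b : Fin k → Bool, ∃ g ∈ 𝒮, ∀ i, g (x i) = if b i then 1 else 0

/-- The class `𝒮` has VC dimension exactly `V`. -/
def HasVCDim {α : Type*} (𝒮 : Set (α → ℝ)) (V : ℕ) : Prop :=
  (∃ x : Fin V → α, Shatters 𝒮 x) ∧ ∀ x : Fin (V + 1) → α, ¬ Shatters 𝒮 x

/-- Separability assumption (A₁): a countable subclass `𝒮' ⊆ 𝒮` that is dense in
the sense of pointwise convergence of the loss `r`. -/
def SeparableClass {α : Type*} (r : (α → ℝ) → α × ℝ → ℝ) (𝒮 𝒮' : Set (α → ℝ)) : Prop :=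
  𝒮' ⊆ 𝒮 ∧ 𝒮'.Countable ∧
    ∀ g ∈ 𝒮, ∃ u : ℕ → α → ℝ, (∀ k, u k ∈ 𝒮') ∧
      ∀ p : α × ℝ, Tendsto (fun k => r (u k) p) atTop (𝓝 (r g p))

/-- The set of admissible distributions for the minimax risk: `μ` is the joint law of
`(X, Y, S)`, with regression function `η` satisfying the Massart noise condition with
margin `h`, Bayes classifier in `𝒮`, and propensity `e`. -/
def PUAdmissible {α : Type*} [MeasurableSpace α] (e : α → ℝ) (𝒮 : Set (α → ℝ)) (h : ℝ)
    (μ : Measure (α × ℝ × ℝ)) (η : α → ℝ) : Prop :=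
  IsProbabilityMeasure μ ∧
    (∀ᵐ p ∂μ, (p.2.1 = 0 ∨ p.2.1 = 1) ∧ (p.2.2 = 0 ∨ p.2.2 = 1)) ∧
    IsRegression μ (fun p => p.1) (fun p => p.2.1) η ∧
    IsPropensity μ (fun p => p.1) (fun p => p.2.1) (fun p => p.2.2) e ∧
    bayes η ∈ 𝒮 ∧ (∀ x, h ≤ |2 * η x - 1|)

/-- Minimax risk: infimum over estimators (functions of the observed `(X_i, S_i)` sample,
valued in `𝒮`) of the supremum over admissible distributions of the expected excess risk. -/
def minimaxRisk {α : Type*} [MeasurableSpace α] (e : α → ℝ) (𝒮 : Set (α → ℝ)) (h : ℝ)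
    (n : ℕ) : ℝ :=
  ⨅ ghat : {f : (Fin n → α × ℝ) → α → ℝ // ∀ z, f z ∈ 𝒮},
    ⨆ q : {q : Measure (α × ℝ × ℝ) × (α → ℝ) // PUAdmissible e 𝒮 h q.1 q.2},
      ∫ z, excessRisk q.1.1 (fun p => p.1) (fun p => p.2.1) q.1.2 (ghat.1 z)
        ∂(Measure.pi fun _ : Fin n => q.1.1.map (fun p => (p.1, p.2.2)))

def sgB (b : Bool) : ℝ := if b then 1 else -1
def btB (b : Bool) : ℝ := if b then 1 else 0

lemma mgf_rad (n : ℕ) (y : Fin n → ℝ) :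
    ∑ ε : Fin n → Bool, exp (∑ i, sgB (ε i) * y i) ≤ 2 ^ n * exp ((∑ i, y i ^ 2) / 2) := by
  have h1 : ∑ ε : Fin n → Bool, exp (∑ i, sgB (ε i) * y i)
      = ∏ i, ∑ b : Bool, exp (sgB b * y i) := by
    rw [Finset.prod_univ_sum, Fintype.piFinset_univ]
    exact Finset.sum_congr rfl fun ε _ => Real.exp_sum _ _
  rw [h1, Finset.sum_div, Real.exp_sum]
  have h2 : (2 : ℝ) ^ n = ∏ _i : Fin n, (2 : ℝ) := by simp
  rw [h2, ← Finset.prod_mul_distrib]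
  refine Finset.prod_le_prod (fun i _ => Finset.sum_nonneg fun b _ => (exp_pos _).le) ?_
  intro i _
  have := Real.cosh_le_exp_half_sq (y i)
  rw [Real.cosh_eq] at this
  simp [sgB]
  linarith

lemma emax {n : ℕ} {ι : Type*} (J : Finset ι) (Z : ι → (Fin n → Bool) → ℝ) (l c L : ℝ)
    (hl : 0 < l) (hJ : J.Nonempty)
    (h : ∀ j ∈ J, ∑ ε, exp (l * Z j ε) ≤ 2 ^ n * exp c) (hL : log J.card + c ≤ L) :
    ∃ M : (Fin n → Bool) → ℝ, (∀ j ∈ J, ∀ ε, Z j ε ≤ M ε) ∧ ∑ ε, M ε ≤ 2 ^ n * (L / l) := by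
  refine ⟨fun ε => (L - 1 + ∑ j ∈ J, exp (l * Z j ε - L)) / l, ?_, ?_⟩
  · intro j hj ε
    rw [le_div_iff₀ hl]
    have h1 : exp (l * Z j ε - L) ≤ ∑ j ∈ J, exp (l * Z j ε - L) :=
      Finset.single_le_sum (f := fun j => exp (l * Z j ε - L)) (fun _ _ => (exp_pos _).le) hj
    have := Real.add_one_le_exp (l * Z j ε - L)
    linarith
  · have hc : (0 : ℝ) < J.card := by exact_mod_cast hJ.card_pos
    have h3 : ∑ ε : Fin n → Bool, ∑ j ∈ J, exp (l * Z j ε - L) ≤ 2 ^ n := by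
      rw [Finset.sum_comm]
      calc ∑ j ∈ J, ∑ ε, exp (l * Z j ε - L) = ∑ j ∈ J, exp (-L) * ∑ ε, exp (l * Z j ε) := by
            refine Finset.sum_congr rfl fun j _ => ?_
            rw [Finset.mul_sum]
            refine Finset.sum_congr rfl fun ε _ => ?_
            rw [← exp_add]; congr 1; ring
        _ ≤ ∑ j ∈ J, exp (-L) * (2 ^ n * exp c) :=
            Finset.sum_le_sum fun j hj => mul_le_mul_of_nonneg_left (h j hj) (exp_pos _).le
        _ = 2 ^ n * exp (log J.card + c - L) := by
            rw [Finset.sum_const, nsmul_eq_mul, show log (J.card : ℝ) + c - L = log J.card + (c + -L) by ring, exp_add, exp_add, exp_log hc]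
            ring
        _ ≤ 2 ^ n * 1 := by
            gcongr
            rw [Real.exp_le_one_iff]; linarith
        _ = 2 ^ n := mul_one _
    rw [← Finset.sum_div, Finset.sum_add_distrib, Finset.sum_const]
    simp only [Finset.card_univ, Fintype.card_pi, Fintype.card_bool, Finset.prod_const, Fintype.card_fin, nsmul_eq_mul]
    rw [← mul_div_assoc]
    gcongr
    push_cast
    linarith

/-- no (V+1)-tuple is shattered -/
def NoSh {ι : Type*} (T : Finset (ι → Bool)) (V : ℕ) : Prop :=
  ∀ j : Fin (V + 1) → ι, ∃ c : Fin (V + 1) → Bool, ∀ t ∈ T, ∃ i, t (j i) ≠ c i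

lemma choose_sum_le (m V : ℕ) (x : ℝ) (hx : 0 < x) (hx1 : x ≤ 1) :
    ∑ k ∈ Finset.Iic V, (m.choose k : ℝ) ≤ x⁻¹ ^ V * exp (x * m) := by
  have h1 : ∑ k ∈ Finset.Iic V, (m.choose k : ℝ) * x ^ V ≤ (x + 1) ^ m := by
    rw [add_pow]
    calc ∑ k ∈ Finset.Iic V, (m.choose k : ℝ) * x ^ V
        ≤ ∑ k ∈ Finset.Iic V, (m.choose k : ℝ) * x ^ k := by
          refine Finset.sum_le_sum fun k hk => ?_
          have := Finset.mem_Iic.1 hk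
          exact mul_le_mul_of_nonneg_left (pow_le_pow_of_le_one hx.le hx1 this) (by positivity)
      _ = ∑ k ∈ (Finset.Iic V).filter (· ≤ m), (m.choose k : ℝ) * x ^ k := by
          rw [Finset.sum_filter]
          refine Finset.sum_congr rfl fun k _ => ?_
          split_ifs with h
          · rfl
          · rw [Nat.choose_eq_zero_of_lt (not_le.1 h)]; simp
      _ ≤ ∑ k ∈ Finset.range (m + 1), (m.choose k : ℝ) * x ^ k := by
          refine Finset.sum_le_sum_of_subset_of_nonneg ?_ fun _ _ _ => by positivity
          intro k hk
          simp at hk ⊢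
          omega
      _ = _ := by
          refine Finset.sum_congr rfl fun k _ => ?_
          simp; ring
  have h2 : (x + 1) ^ m ≤ exp (x * m) := by
    rw [mul_comm, Real.exp_nat_mul]
    exact pow_le_pow_left₀ (by positivity) (Real.add_one_le_exp x) m
  rw [← Finset.sum_mul] at h1
  rw [inv_pow, inv_mul_eq_div, le_div_iff₀ (by positivity)]
  linarith

lemma sauer {m V : ℕ} (T : Finset (Fin m → Bool)) (hT : NoSh T V) (x : ℝ) (hx : 0 < x) (hx1 : x ≤ 1) :
    (T.card : ℝ) ≤ x⁻¹ ^ V * exp (x * m) := by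
  classical
  let φ : (Fin m → Bool) → Finset (Fin m) := fun t => Finset.univ.filter fun i => t i = true
  have hφ : Function.Injective φ := by
    intro s t h
    funext i
    have : i ∈ φ s ↔ i ∈ φ t := by rw [h]
    simp only [φ, Finset.mem_filter, Finset.mem_univ, true_and] at this
    exact Bool.eq_iff_iff.2 this
  set A := T.image φ
  have hA : T.card = A.card := (Finset.card_image_of_injective _ hφ).symm
  have hvc : A.vcDim ≤ V := by
    refine Finset.sup_le fun s hs => ?_
    rw [Finset.mem_shatterer] at hs
    by_contra hlt
    push Not at hlt
    obtain ⟨s', hs', hcard⟩ := Finset.exists_subset_card_eq (show V + 1 ≤ s.card from hlt)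
    have hs2 := hs.mono_right hs'
    let eqv := s'.equivFinOfCardEq hcard
    obtain ⟨c, hc⟩ := hT (fun i => (eqv.symm i : Fin m))
    obtain ⟨B, hB, hBi⟩ := hs2 (Finset.filter_subset (fun y => ∃ hy : y ∈ s', c (eqv ⟨y, hy⟩) = true) s')
    obtain ⟨t, ht, rfl⟩ := Finset.mem_image.1 hB
    obtain ⟨i, hi⟩ := hc t ht
    apply hi
    have h1 := Finset.ext_iff.1 hBi (eqv.symm i : Fin m)
    simp [φ] at h1
    exact h1
  have h2 := (Finset.card_le_card_shatterer A).trans A.card_shatterer_le_sum_vcDim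
  have h3 : A.card ≤ ∑ k ∈ Finset.Iic V, m.choose k := by
    refine h2.trans ?_
    rw [Fintype.card_fin]
    exact Finset.sum_le_sum_of_subset (Finset.Iic_subset_Iic.2 hvc)
  rw [hA]
  refine le_trans ?_ (choose_sum_le m V x hx hx1)
  exact_mod_cast h3


def dW {n : ℕ} (w : Fin n → ℝ) (s t : Fin n → Bool) : ℝ := ∑ i, if s i = t i then 0 else w i ^ 2

lemma dW_comm {n : ℕ} (w : Fin n → ℝ) (s t : Fin n → Bool) : dW w s t = dW w t s := by
  unfold dW
  refine Finset.sum_congr rfl fun i _ => ?_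
  simp only [eq_comm]

lemma dW_tri {n : ℕ} (w : Fin n → ℝ) (s t r : Fin n → Bool) : dW w s r ≤ dW w s t + dW w t r := by
  unfold dW
  rw [← Finset.sum_add_distrib]
  refine Finset.sum_le_sum fun i _ => ?_
  have := sq_nonneg (w i)
  by_cases h1 : s i = t i <;> by_cases h2 : t i = r i <;> by_cases h3 : s i = r i <;>
    simp_all

lemma exists_tuple {n m : ℕ} (w : Fin n → ℝ)
    (R : Finset (Fin n → Bool)) (B ρ : ℝ) (hB : B = ∑ i, w i ^ 2) (hB0 : 0 < B) (hρB : ρ ≤ B)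
    (hsep : ∀ s ∈ R, ∀ t ∈ R, s ≠ t → ρ < dW w s t)
    (hm : (R.card : ℝ) ^ 2 * exp (-(ρ / B * m)) < 1) :
    ∃ j : Fin m → Fin n, ∀ s ∈ R, ∀ t ∈ R, s ≠ t → ∃ k, s (j k) ≠ t (j k) := by
  classical
  by_contra hcon
  push Not at hcon
  have h1 : ∑ j : Fin m → Fin n, ∏ k, (w (j k) ^ 2 / B) = 1 := by
    have := Finset.prod_univ_sum (fun _ : Fin m => (Finset.univ : Finset (Fin n)))
      (fun _ i => w i ^ 2 / B)
    rw [Fintype.piFinset_univ] at this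
    rw [← this, ← Finset.sum_div, ← hB, div_self hB0.ne']
    simp
  have h2 : ∀ s t : Fin n → Bool, ∑ j : Fin m → Fin n, ∏ k, (if s (j k) = t (j k) then w (j k) ^ 2 / B else 0)
      = (1 - dW w s t / B) ^ m := by
    intro s t
    have := Finset.prod_univ_sum (fun _ : Fin m => (Finset.univ : Finset (Fin n)))
      (fun _ i => if s i = t i then w i ^ 2 / B else 0)
    rw [Fintype.piFinset_univ] at this
    rw [← this]
    simp only [Finset.prod_const, Finset.card_univ, Fintype.card_fin]
    congr 1
    rw [eq_sub_iff_add_eq, dW, Finset.sum_div, ← Finset.sum_add_distrib]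
    have h0 : (1 : ℝ) = ∑ i, w i ^ 2 / B := by
      rw [← Finset.sum_div, ← hB, div_self hB0.ne']
    rw [h0]
    refine Finset.sum_congr rfl fun i _ => ?_
    split_ifs <;> simp
  have hd0 : ∀ s t : Fin n → Bool, dW w s t ≤ B := by
    intro s t
    rw [hB]
    refine Finset.sum_le_sum fun i _ => ?_
    have := sq_nonneg (w i)
    split_ifs <;> linarith
  have h3 : (1 : ℝ) ≤ ∑ p ∈ R.offDiag, (1 - dW w p.1 p.2 / B) ^ m := by
    have h2' : ∑ p ∈ R.offDiag, (1 - dW w p.1 p.2 / B) ^ m = ∑ p ∈ R.offDiag,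
        ∑ j : Fin m → Fin n, ∏ k, (if p.1 (j k) = p.2 (j k) then w (j k) ^ 2 / B else 0) :=
      Finset.sum_congr rfl (fun p _ => (h2 p.1 p.2).symm)
    rw [h2', ← h1, Finset.sum_comm]
    refine Finset.sum_le_sum fun j _ => ?_
    obtain ⟨s, hs, t, ht, hst, hj⟩ := hcon j
    have hmem : (s, t) ∈ R.offDiag := by simp [hs, ht, hst]
    refine le_trans (le_of_eq ?_) (Finset.single_le_sum (f := fun p : (Fin n → Bool) × (Fin n → Bool) =>
      ∏ k, (if p.1 (j k) = p.2 (j k) then w (j k) ^ 2 / B else 0)) ?_ hmem)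
    · refine Finset.prod_congr rfl fun k _ => ?_
      simp [hj k]
    · intro p _
      refine Finset.prod_nonneg fun k _ => ?_
      split_ifs <;> positivity
  have h4 : ∑ p ∈ R.offDiag, (1 - dW w p.1 p.2 / B) ^ m ≤ ∑ p ∈ R.offDiag, exp (-(ρ / B * m)) := by
    refine Finset.sum_le_sum fun p hp => ?_
    rw [Finset.mem_offDiag] at hp
    have hs := hsep _ hp.1 _ hp.2.1 hp.2.2
    have e1 : exp (-(ρ / B * m)) = exp (-(ρ / B)) ^ m := by
      rw [← Real.exp_nat_mul]; congr 1; ring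
    rw [e1]
    refine pow_le_pow_left₀ ?_ ?_ m
    · rw [sub_nonneg, div_le_one hB0]; exact hd0 _ _
    · have := Real.add_one_le_exp (-(ρ / B))
      have : ρ / B ≤ dW w p.1 p.2 / B := by gcongr
      linarith
  rw [Finset.sum_const, nsmul_eq_mul] at h4
  have h5 : (R.offDiag.card : ℝ) ≤ (R.card : ℝ) ^ 2 := by
    have : R.offDiag.card ≤ R.card ^ 2 := by
      rw [Finset.offDiag_card, sq]; omega
    exact_mod_cast this
  have := mul_le_mul_of_nonneg_right h5 (exp_pos (-(ρ / B * m))).le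
  linarith

lemma packing {n V : ℕ} (w : Fin n → ℝ)
    (R : Finset (Fin n → Bool)) (hR : NoSh R V) (hV : 0 < V) (ρ : ℝ) (hρ : 0 < ρ)
    (hsep : ∀ s ∈ R, ∀ t ∈ R, s ≠ t → ρ < dW w s t) (hne : R.Nonempty) :
    log R.card ≤ V * (4 + 2 * log (1 + (∑ i, w i ^ 2) / ρ)) := by
  classical
  set B := ∑ i, w i ^ 2 with hB
  have hBn : 0 ≤ B := Finset.sum_nonneg fun i _ => sq_nonneg _
  have hV1 : (1 : ℝ) ≤ V := by exact_mod_cast hV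
  have hlog0 : 0 ≤ log (1 + B / ρ) := Real.log_nonneg (by have : 0 ≤ B / ρ := by positivity
                                                          linarith)
  rcases le_or_gt R.card 1 with h1 | h1
  · have : R.card = 1 := le_antisymm h1 hne.card_pos
    rw [this]; simp; positivity
  obtain ⟨s, hs, t, ht, hst⟩ := Finset.one_lt_card.1 h1
  have hρB : ρ < B := by
    refine (hsep s hs t ht hst).trans_le ?_
    refine Finset.sum_le_sum fun i _ => ?_
    have := sq_nonneg (w i)
    split_ifs <;> linarith
  have hB0 : 0 < B := hρ.trans hρB
  set p := ρ / B with hp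
  have hp0 : 0 < p := by positivity
  have hp1 : p < 1 := by rw [hp, div_lt_one hB0]; exact hρB
  set l := log (R.card : ℝ) with hl
  have hN0 : (0 : ℝ) < R.card := by exact_mod_cast hne.card_pos
  have hl0 : 0 ≤ l := Real.log_nonneg (by exact_mod_cast hne.card_pos)
  set m := ⌊2 * l / p⌋₊ + 1 with hm
  have hm1 : (m : ℝ) ≤ 2 * l / p + 1 := by
    rw [hm]; push_cast
    have := Nat.floor_le (show 0 ≤ 2 * l / p by positivity)
    linarith
  have hm2 : 2 * l / p < m := by
    rw [hm]; push_cast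
    exact Nat.lt_floor_add_one _
  rw [div_lt_iff₀ hp0] at hm2
  have hm1' : p * m ≤ 2 * l + p := by
    calc p * m ≤ p * (2 * l / p + 1) := by gcongr
      _ = 2 * l + p := by field_simp
  obtain ⟨j, hj⟩ := exists_tuple (m := m) w R B ρ hB hB0 hρB.le hsep (by
    have : (R.card : ℝ) ^ 2 = exp (2 * l) := by
      rw [two_mul, exp_add, hl, exp_log hN0]; ring
    rw [this, ← exp_add, Real.exp_lt_one_iff]
    linarith)
  have hcard : (R.image (fun s => s ∘ j)).card = R.card := by
    refine Finset.card_image_of_injOn ?_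
    intro s hs t ht hst
    by_contra hne
    obtain ⟨k, hk⟩ := hj s hs t ht hne
    exact hk (congrFun hst k)
  have hNS : NoSh (R.image (fun s => s ∘ j)) V := by
    intro jj
    obtain ⟨c, hc⟩ := hR (fun i => j (jj i))
    refine ⟨c, fun t ht => ?_⟩
    obtain ⟨s, hs, rfl⟩ := Finset.mem_image.1 ht
    exact hc s hs
  have hS := sauer _ hNS (p / 4) (by positivity) (by linarith)
  rw [hcard] at hS
  have hS' : l ≤ V * log (p / 4)⁻¹ + p / 4 * m := by
    have := Real.log_le_log hN0 hS
    rwa [Real.log_mul (by positivity) (exp_pos _).ne', Real.log_exp, Real.log_pow] at this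
  have e2 : log (p / 4)⁻¹ = log 4 + log (B / ρ) := by
    rw [← Real.log_mul (by norm_num) (by positivity)]
    congr 1
    rw [hp]; field_simp
  have e3 : log (B / ρ) ≤ log (1 + B / ρ) := Real.log_le_log (by positivity) (by linarith)
  have e4 : log 4 ≤ 1.4 := by
    have : (4 : ℝ) = 2 ^ 2 := by norm_num
    rw [this, Real.log_pow]
    have := Real.log_two_lt_d9
    push_cast
    linarith
  rw [e2] at hS'
  have e5 : (V : ℝ) * (log 4 + log (B / ρ)) ≤ V * (1.4 + log (1 + B / ρ)) := by gcongr
  nlinarith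

lemma net_exists {n V : ℕ} (w : Fin n → ℝ)
    (T : Finset (Fin n → Bool)) (hT : NoSh T V) (hV : 0 < V) (hne : T.Nonempty) (ρ : ℝ) (hρ : 0 < ρ) :
    ∃ (R : Finset (Fin n → Bool)) (pr : (Fin n → Bool) → (Fin n → Bool)),
      R.Nonempty ∧ log R.card ≤ V * (4 + 2 * log (1 + (∑ i, w i ^ 2) / ρ)) ∧
      ∀ t ∈ T, pr t ∈ R ∧ dW w t (pr t) ≤ ρ := by
  classical
  let F := T.powerset.filter fun R => ∀ s ∈ R, ∀ t ∈ R, s ≠ t → ρ < dW w s t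
  have hF : F.Nonempty := ⟨∅, by simp [F]⟩
  obtain ⟨R, hRF, hmax⟩ := Finset.exists_max_image F Finset.card hF
  simp only [F, Finset.mem_filter, Finset.mem_powerset] at hRF hmax
  have hcov : ∀ t ∈ T, ∃ s ∈ R, dW w t s ≤ ρ := by
    intro t ht
    by_contra hcon
    push Not at hcon
    have htR : t ∉ R := by
      intro h
      have := hcon t h
      simp [dW] at this
      linarith
    have := hmax (insert t R) ⟨Finset.insert_subset ht hRF.1, ?_⟩
    · rw [Finset.card_insert_of_notMem htR] at this
      omega
    · intro a ha b hb hab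
      rw [Finset.mem_insert] at ha hb
      rcases ha with rfl | ha <;> rcases hb with rfl | hb
      · exact absurd rfl hab
      · exact hcon b hb
      · rw [dW_comm]; exact hcon a ha
      · exact hRF.2 a ha b hb hab
  have hRne : R.Nonempty := by
    obtain ⟨t, ht⟩ := hne
    obtain ⟨s, hs, _⟩ := hcov t ht
    exact ⟨s, hs⟩
  have hpr : ∀ t, ∃ s, t ∈ T → s ∈ R ∧ dW w t s ≤ ρ := by
    intro t
    by_cases ht : t ∈ T
    · obtain ⟨s, hs⟩ := hcov t ht
      exact ⟨s, fun _ => hs⟩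
    · exact ⟨t, fun h => absurd h ht⟩
  choose pr hpr using hpr
  refine ⟨R, pr, hRne, packing w R ?_ hV ρ hρ hRF.2 hRne, hpr⟩
  intro j
  obtain ⟨c, hc⟩ := hT j
  exact ⟨c, fun t ht => hc t (hRF.1 ht)⟩

lemma geo_sum (A : ℝ) (hA : 0 ≤ A) (K : ℕ) :
    ∑ k ∈ Finset.range K, (A + 8 * k) / 2 ^ (k + 1) ≤ A + 8 := by
  have : ∑ k ∈ Finset.range K, (A + 8 * k) / 2 ^ (k + 1)
      = A * (1 - 1 / 2 ^ K) + 8 * (1 - (K + 1) / 2 ^ K) := by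
    induction K with
    | zero => simp
    | succ K ih =>
      rw [Finset.sum_range_succ, ih]
      push_cast
      field_simp
      ring
  rw [this]
  have h1 : (0 : ℝ) ≤ 1 / 2 ^ K := by positivity
  have h2 : (0 : ℝ) ≤ (K + 1) / 2 ^ K := by positivity
  nlinarith


lemma btB_sq (b : Bool) : btB b ^ 2 = btB b := by cases b <;> simp [btB]
lemma btB_nonneg (b : Bool) : 0 ≤ btB b := by cases b <;> simp [btB]

lemma chain {n V : ℕ} (w v : Fin n → ℝ) (hw : ∀ i, 1 ≤ w i) (hv : ∀ i, |v i| ≤ w i)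
    (T : Finset (Fin n → Bool)) (hT : NoSh T V) (hV : 0 < V) (hne : T.Nonempty)
    (b : ℝ) (hb : 0 < b) :
    ∃ M : (Fin n → Bool) → ℝ,
      (∀ t ∈ T, ∀ ε : Fin n → Bool,
        ∑ i, (sgB (ε i) * (v i * btB (t i)) - b * w i ^ 2 * btB (t i)) ≤ M ε) ∧
      ∑ ε, M ε ≤ 2 ^ n * (V / b * (30 + 5 * log (1 + b ^ 2 * (∑ i, w i ^ 2) / V))) := by
  classical
  have hV1 : (1 : ℝ) ≤ V := by exact_mod_cast hV
  have hV0 : (0 : ℝ) < V := by linarith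
  set B := ∑ i, w i ^ 2 with hB
  have hBn : 0 ≤ B := Finset.sum_nonneg fun i _ => sq_nonneg _
  have hv2 : ∀ i, v i ^ 2 ≤ w i ^ 2 := fun i => sq_le_sq' (neg_le_of_abs_le (hv i)) (le_of_abs_le (hv i))
  set D : ℝ := V / b ^ 2 with hD
  have hD0 : 0 < D := by positivity
  set L := log (1 + b ^ 2 * B / V) with hL
  have hL0 : 0 ≤ L := Real.log_nonneg (by
    have : 0 ≤ b ^ 2 * B / V := by positivity
    linarith)
  have hnets := fun k : ℕ => net_exists w T hT hV hne (D / 4 ^ k) (by positivity)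
  choose R pr hRne hRlog hpr using hnets
  have hRlog' : ∀ k, log (R k).card ≤ V * (4 + 2 * L + 4 * k) := by
    intro k
    refine (hRlog k).trans ?_
    have h1 : log (1 + B / (D / 4 ^ k)) ≤ L + 2 * k := by
      have h2 : 1 + B / (D / 4 ^ k) ≤ (1 + b ^ 2 * B / V) * 4 ^ k := by
        have : B / (D / 4 ^ k) = b ^ 2 * B / V * 4 ^ k := by rw [hD]; field_simp
        rw [this]
        have : (1 : ℝ) ≤ 4 ^ k := one_le_pow₀ (by norm_num)
        nlinarith
      have h3 := Real.log_le_log (by positivity) h2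
      rw [Real.log_mul (by positivity) (by positivity), Real.log_pow] at h3
      have h4 : log 4 ≤ 2 := by
        have : (4 : ℝ) = 2 ^ 2 := by norm_num
        rw [this, Real.log_pow]
        have := Real.log_two_lt_d9
        push_cast
        linarith
      have : (k : ℝ) * log 4 ≤ k * 2 := by gcongr
      linarith
    have : 4 + 2 * log (1 + B / (D / 4 ^ k)) ≤ 4 + 2 * L + 4 * k := by linarith
    gcongr
  set G : (Fin n → Bool) → (Fin n → Bool) → ℝ := fun ε t => ∑ i, sgB (ε i) * (v i * btB (t i)) with hG
  set mu : (Fin n → Bool) → ℝ := fun t => ∑ i, w i ^ 2 * btB (t i) with hmu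
  -- level zero
  obtain ⟨M0, hM0, hM0s⟩ := emax (R 0) (fun s ε => G ε s - b * mu s) (2 * b) 0
    (V * (4 + 2 * L)) (by positivity) (hRne 0) (by
      intro s _
      have e1 : ∀ ε, exp (2 * b * (G ε s - b * mu s))
          = exp (∑ i, sgB (ε i) * (2 * b * (v i * btB (s i)))) * exp (-(2 * b ^ 2 * mu s)) := by
        intro ε
        rw [← exp_add]
        congr 1
        have : ∑ i, sgB (ε i) * (2 * b * (v i * btB (s i))) = 2 * b * G ε s := by
          rw [hG, Finset.mul_sum]
          exact Finset.sum_congr rfl fun i _ => by ring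
        rw [this]; ring
      simp_rw [e1]
      rw [← Finset.sum_mul]
      have e2 := mgf_rad n (fun i => 2 * b * (v i * btB (s i)))
      have e3 : (∑ i, (2 * b * (v i * btB (s i))) ^ 2) / 2 ≤ 2 * b ^ 2 * mu s := by
        rw [hmu, Finset.mul_sum, Finset.sum_div]
        refine Finset.sum_le_sum fun i _ => ?_
        have : (2 * b * (v i * btB (s i))) ^ 2 / 2 = 2 * b ^ 2 * (v i ^ 2 * btB (s i)) := by
          rw [mul_pow, mul_pow (v i), btB_sq]; ring
        rw [this]
        have := btB_nonneg (s i)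
        have := hv2 i
        gcongr
      calc _ ≤ 2 ^ n * exp ((∑ i, (2 * b * (v i * btB (s i))) ^ 2) / 2) * exp (-(2 * b ^ 2 * mu s)) := by
            gcongr
        _ ≤ 2 ^ n * exp (2 * b ^ 2 * mu s) * exp (-(2 * b ^ 2 * mu s)) := by gcongr
        _ = 2 ^ n * exp 0 := by rw [mul_assoc, ← exp_add]; congr 2; ring) (by
      have := hRlog' 0
      simpa using this)
  -- links
  have hlink : ∀ k : ℕ, ∃ M : (Fin n → Bool) → ℝ,
      (∀ t ∈ T, ∀ ε, G ε (pr (k + 1) t) - G ε (pr k t) ≤ M ε) ∧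
      ∑ ε, M ε ≤ 2 ^ n * (V / b * ((14.5 + 4 * L + 8 * k) / 2 ^ (k + 1))) := by
    intro k
    set l : ℝ := b * 2 ^ (k + 1) with hl
    have hl0 : 0 < l := by positivity
    obtain ⟨M, hM, hMs⟩ := emax (T.image fun t => (pr (k + 1) t, pr k t))
      (fun p ε => G ε p.1 - G ε p.2) l (5 / 2 * V) (V * (14.5 + 4 * L + 8 * k)) hl0
      (hne.image _) (by
        intro p hp
        obtain ⟨t, ht, rfl⟩ := Finset.mem_image.1 hp
        simp only
        set s := pr (k + 1) t
        set s' := pr k t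
        have hd : dW w s s' ≤ 5 * D / 4 ^ (k + 1) := by
          have h1 := (hpr (k + 1) t ht).2
          have h2 := (hpr k t ht).2
          have h3 := dW_tri w s t s'
          rw [dW_comm w s t] at h3
          have h4 : D / 4 ^ k = 4 * D / 4 ^ (k + 1) := by rw [pow_succ]; field_simp
          rw [h4] at h2
          have : 5 * D / 4 ^ (k + 1) = D / 4 ^ (k + 1) + 4 * D / 4 ^ (k + 1) := by ring
          rw [this]
          linarith
        have e1 : ∀ ε, exp (l * (G ε s - G ε s'))
            = exp (∑ i, sgB (ε i) * (l * (v i * (btB (s i) - btB (s' i))))) := by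
          intro ε
          congr 1
          rw [hG, ← Finset.sum_sub_distrib, Finset.mul_sum]
          exact Finset.sum_congr rfl fun i _ => by ring
        simp_rw [e1]
        refine (mgf_rad n _).trans ?_
        have e3 : ∑ i, (l * (v i * (btB (s i) - btB (s' i)))) ^ 2 ≤ l ^ 2 * dW w s s' := by
          rw [dW, Finset.mul_sum]
          refine Finset.sum_le_sum fun i _ => ?_
          rw [mul_pow]
          refine mul_le_mul_of_nonneg_left ?_ (sq_nonneg l)
          rw [mul_pow]
          have := hv2 i
          cases s i <;> cases s' i <;> simp [btB, this]
        have e4 : l ^ 2 * dW w s s' ≤ 5 * (V : ℝ) := by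
          calc l ^ 2 * dW w s s' ≤ l ^ 2 * (5 * D / 4 ^ (k + 1)) := by gcongr
            _ = 5 * (V : ℝ) := by
              have : (4 : ℝ) ^ (k + 1) = (2 ^ (k + 1)) ^ 2 := by
                rw [← pow_mul, mul_comm, pow_mul]; norm_num
              rw [hl, hD, this]; field_simp
        gcongr
        linarith) (by
        have hc : ((T.image fun t => (pr (k + 1) t, pr k t)).card : ℝ)
            ≤ (R (k + 1)).card * (R k).card := by
          have : (T.image fun t => (pr (k + 1) t, pr k t)) ⊆ R (k + 1) ×ˢ R k := by
            intro p hp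
            obtain ⟨t, ht, rfl⟩ := Finset.mem_image.1 hp
            exact Finset.mem_product.2 ⟨(hpr (k + 1) t ht).1, (hpr k t ht).1⟩
          have := Finset.card_le_card this
          rw [Finset.card_product] at this
          exact_mod_cast this
        have c1 : (0 : ℝ) < (R (k + 1)).card := by exact_mod_cast (hRne (k + 1)).card_pos
        have c2 : (0 : ℝ) < (R k).card := by exact_mod_cast (hRne k).card_pos
        have c3 : (0 : ℝ) < (T.image fun t => (pr (k + 1) t, pr k t)).card := by
          exact_mod_cast (hne.image _).card_pos
        have := Real.log_le_log c3 hc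
        rw [Real.log_mul c1.ne' c2.ne'] at this
        have h1 := hRlog' (k + 1)
        have h2 := hRlog' k
        push_cast at h1
        linarith)
    refine ⟨M, fun t ht ε => hM _ (Finset.mem_image_of_mem _ ht) ε, hMs.trans (le_of_eq ?_)⟩
    rw [hl]
    field_simp
  choose M hM hMs using hlink
  obtain ⟨K, hK⟩ : ∃ K : ℕ, D / 4 ^ K < 1 := by
    obtain ⟨K, hK⟩ := pow_unbounded_of_one_lt D (show (1 : ℝ) < 4 by norm_num)
    exact ⟨K, by rwa [div_lt_one (by positivity)]⟩
  have hlast : ∀ t ∈ T, pr K t = t := by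
    intro t ht
    have h1 := (hpr K t ht).2.trans_lt hK
    by_contra hcon
    obtain ⟨i, hi⟩ := Function.ne_iff.1 hcon
    have : w i ^ 2 ≤ dW w t (pr K t) := by
      have := Finset.single_le_sum (f := fun i => if t i = pr K t i then 0 else w i ^ 2)
        (fun i _ => by
          have := sq_nonneg (w i)
          split_ifs <;> linarith) (Finset.mem_univ i)
      simp only [if_neg (Ne.symm hi)] at this
      exact this
    have := hw i
    nlinarith
  refine ⟨fun ε => M0 ε + V / b + ∑ k ∈ Finset.range K, M k ε, ?_, ?_⟩
  · intro t ht ε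
    have e0 : ∑ i, (sgB (ε i) * (v i * btB (t i)) - b * w i ^ 2 * btB (t i)) = G ε t - b * mu t := by
      rw [Finset.sum_sub_distrib, hG, hmu, Finset.mul_sum]
      congr 1
      exact Finset.sum_congr rfl fun i _ => by ring
    rw [e0]
    have e1 := Finset.sum_range_sub (fun k => G ε (pr k t)) K
    simp only [hlast t ht] at e1
    have e2 := Finset.sum_le_sum (s := Finset.range K) (fun k _ => hM k t ht ε)
    have e3 := hM0 _ (hpr 0 t ht).1 ε
    have e4 : mu (pr 0 t) ≤ mu t + D := by
      have h1 := (hpr 0 t ht).2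
      simp only [pow_zero, div_one] at h1
      refine le_trans ?_ (add_le_add_right h1 _)
      rw [hmu, dW, ← Finset.sum_add_distrib]
      refine Finset.sum_le_sum fun i _ => ?_
      have := sq_nonneg (w i)
      cases t i <;> cases pr 0 t i <;> simp [btB, this]
    have e5 : b * D = V / b := by rw [hD]; field_simp
    have e6 : b * mu (pr 0 t) ≤ b * (mu t + D) := by gcongr
    linarith
  · rw [Finset.sum_add_distrib, Finset.sum_add_distrib, Finset.sum_comm]
    have f1 := Finset.sum_le_sum (s := Finset.range K) (fun k _ => hMs k)
    rw [← Finset.mul_sum, ← Finset.mul_sum] at f1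
    have f2 := geo_sum (14.5 + 4 * L) (by positivity) K
    have f3 : (2 : ℝ) ^ n * (V / b * ∑ k ∈ Finset.range K, (14.5 + 4 * L + 8 * k) / 2 ^ (k + 1))
      ≤ 2 ^ n * (V / b * (14.5 + 4 * L + 8)) := by gcongr
    have f4 : ∑ _ε : Fin n → Bool, (V : ℝ) / b = 2 ^ n * (V / b) := by simp
    have f5 : V * (4 + 2 * L) / (2 * b) = V / b * (2 + L) := by field_simp; ring
    rw [f5] at hM0s
    rw [f4]
    have f6 : (0 : ℝ) ≤ 2 ^ n * (V / b) := by positivity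
    nlinarith


def smx {N : ℕ} (F : Fin (N + 1) → ℝ) : ℝ := Finset.univ.sup' Finset.univ_nonempty F

lemma le_smx {N : ℕ} (F : Fin (N + 1) → ℝ) (k : Fin (N + 1)) : F k ≤ smx F :=
  Finset.le_sup' F (Finset.mem_univ k)

lemma smx_le {N : ℕ} (F : Fin (N + 1) → ℝ) (C : ℝ) (h : ∀ k, F k ≤ C) : smx F ≤ C :=
  Finset.sup'_le _ _ fun k _ => h k

lemma smx_abs {N : ℕ} (F : Fin (N + 1) → ℝ) (C : ℝ) (h : ∀ k, |F k| ≤ C) : |smx F| ≤ C := by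
  rw [abs_le]
  exact ⟨(neg_le_of_abs_le (h 0)).trans (le_smx F 0), smx_le _ _ fun k => le_of_abs_le (h k)⟩

lemma smx_meas {N : ℕ} {Ω : Type*} [MeasurableSpace Ω] (F : Fin (N + 1) → Ω → ℝ)
    (h : ∀ k, Measurable (F k)) : Measurable fun ω => smx fun k => F k ω := by
  have := Finset.measurable_sup' (Finset.univ_nonempty (α := Fin (N + 1))) (f := F) fun k _ => h k
  convert this using 2 with ω
  rw [Finset.sup'_apply]
  rfl

lemma bdd_int {Ω : Type*} [MeasurableSpace Ω] (P : Measure Ω) [IsFiniteMeasure P] (F : Ω → ℝ) (C : ℝ)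
    (h : Measurable F) (hC : ∀ ω, |F ω| ≤ C) : Integrable F P :=
  Integrable.of_bound h.aestronglyMeasurable C (Eventually.of_forall hC)

lemma symm_aux {Ω : Type} [MeasurableSpace Ω] (P : Measure Ω) [IsProbabilityMeasure P] {N n : ℕ}
    (φ q : Fin (N + 1) → Ω → ℝ) (hφ : ∀ k, Measurable (φ k)) (hq : ∀ k, Measurable (q k))
    (C : ℝ) (hφC : ∀ k ω, |φ k ω| ≤ C) (hqC : ∀ k ω, |q k ω| ≤ C) :
    2 ^ n * ∫ ω : Fin n → Ω, smx (fun k => ∑ i, ((∫ x, (φ k x - q k x / 2) ∂P) - (φ k (ω i) + q k (ω i) / 2)))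
      ∂(Measure.pi fun _ => P) ≤
    2 * ∑ ε : Fin n → Bool, ∫ ω : Fin n → Ω, smx (fun k => ∑ i, (sgB (ε i) * φ k (ω i) - q k (ω i) / 2))
      ∂(Measure.pi fun _ => P) := by
  set μ : Measure (Fin n → Ω) := Measure.pi fun _ => P with hμ
  have hC0 : 0 ≤ C := (abs_nonneg _).trans (hφC 0 (Classical.choice (by
    by_contra h
    rw [not_nonempty_iff] at h
    have := measure_univ (μ := P)
    rw [Set.univ_eq_empty_iff.2 h] at this
    simp at this)))
  have habs : ∀ k ω, -C ≤ φ k ω ∧ φ k ω ≤ C ∧ -C ≤ q k ω ∧ q k ω ≤ C := fun k ω =>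
    ⟨neg_le_of_abs_le (hφC k ω), le_of_abs_le (hφC k ω), neg_le_of_abs_le (hqC k ω), le_of_abs_le (hqC k ω)⟩
  -- sums bounded
  have hsumb : ∀ (F : Fin n → ℝ) (c : ℝ), (∀ i, |F i| ≤ c) → |∑ i, F i| ≤ n * c := by
    intro F c h
    refine (Finset.abs_sum_le_sum_abs _ _).trans ?_
    refine (Finset.sum_le_sum fun i _ => h i).trans ?_
    simp
  have hPi : ∀ k, Integrable (fun x => φ k x - q k x / 2) P := fun k =>
    bdd_int P _ (2 * C) ((hφ k).sub ((hq k).div_const 2)) fun ω => by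
      obtain ⟨h1, h2, h3, h4⟩ := habs k ω
      rw [abs_le]; constructor <;> linarith
  have hPb : ∀ k, |∫ x, (φ k x - q k x / 2) ∂P| ≤ 2 * C := fun k => by
    have := norm_integral_le_of_norm_le_const (μ := P) (f := fun x => φ k x - q k x / 2) (C := 2 * C)
      (Eventually.of_forall fun ω => by
        obtain ⟨h1, h2, h3, h4⟩ := habs k ω
        rw [Real.norm_eq_abs, abs_le]; constructor <;> linarith)
    simpa using this
  let H : (Fin n → Ω) × (Fin n → Ω) → ℝ := fun z => smx fun k => ∑ i,
    ((φ k (z.2 i) - q k (z.2 i) / 2) - (φ k (z.1 i) + q k (z.1 i) / 2))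
  have hHm : Measurable H := by
    refine smx_meas _ fun k => ?_
    have := hφ k
    have := hq k
    fun_prop
  have hHb : ∀ z, |H z| ≤ n * (3 * C) := fun z => smx_abs _ _ fun k => hsumb _ _ fun i => by
    obtain ⟨h1, h2, h3, h4⟩ := habs k (z.1 i)
    obtain ⟨h1, h2, h3, h4⟩ := habs k (z.2 i)
    rw [abs_le]; constructor <;> linarith
  have hHi : Integrable H (μ.prod μ) := bdd_int _ _ _ hHm hHb
  -- Step 1
  have step1 : ∫ ω : Fin n → Ω, smx (fun k => ∑ i, ((∫ x, (φ k x - q k x / 2) ∂P) - (φ k (ω i) + q k (ω i) / 2))) ∂μ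
      ≤ ∫ z, H z ∂(μ.prod μ) := by
    rw [integral_prod _ hHi]
    refine integral_mono ?_ hHi.integral_prod_left ?_
    · refine bdd_int _ _ (n * (4 * C)) (smx_meas _ fun k => ?_) fun ω => smx_abs _ _ fun k => hsumb _ _ fun i => ?_
      · have := hφ k
        have := hq k
        fun_prop
      · obtain ⟨h1, h2, h3, h4⟩ := habs k (ω i)
        have h5 := abs_le.1 (hPb k)
        rw [abs_le]; constructor <;> linarith
    · intro ω
      refine smx_le _ _ fun k => ?_
      have e1 : ∑ i : Fin n, ((∫ x, (φ k x - q k x / 2) ∂P) - (φ k (ω i) + q k (ω i) / 2))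
          = ∫ ω' : Fin n → Ω, ∑ i, ((φ k (ω' i) - q k (ω' i) / 2) - (φ k (ω i) + q k (ω i) / 2)) ∂μ := by
        have hi : ∀ i, Integrable (fun ω' : Fin n → Ω => φ k (ω' i) - q k (ω' i) / 2) μ := fun i =>
          (measurePreserving_eval (fun _ => P) i).integrable_comp_of_integrable (hPi k)
        have hi2 : ∀ i ∈ (Finset.univ : Finset (Fin n)), Integrable (fun ω' : Fin n → Ω =>
            (φ k (ω' i) - q k (ω' i) / 2) - (φ k (ω i) + q k (ω i) / 2)) μ :=
          fun i _ => (hi i).sub (integrable_const _)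
        rw [integral_finsetSum _ hi2]
        refine Finset.sum_congr rfl fun i _ => ?_
        rw [integral_sub (hi i) (integrable_const _), integral_const]
        have := (measurePreserving_eval (fun _ : Fin n => P) i).map_eq
        have e2 : ∫ ω' : Fin n → Ω, (φ k (ω' i) - q k (ω' i) / 2) ∂μ = ∫ x, (φ k x - q k x / 2) ∂P := by
          rw [← this, integral_map (measurable_pi_apply i).aemeasurable]
          rw [this]; exact (hPi k).aestronglyMeasurable
        rw [e2]; simp
      rw [e1]
      refine integral_mono ?_ ?_ ?_
      · refine bdd_int _ _ (n * (3 * C)) ?_ fun ω' => hsumb _ _ fun i => ?_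
        · have := hφ k
          have := hq k
          fun_prop
        · obtain ⟨h1, h2, h3, h4⟩ := habs k (ω i)
          obtain ⟨h1, h2, h3, h4⟩ := habs k (ω' i)
          rw [abs_le]; constructor <;> linarith
      · exact bdd_int _ _ _ (hHm.comp (measurable_const.prodMk measurable_id)) fun ω' => hHb _
      · intro ω'
        exact le_smx (fun k => ∑ i, ((φ k (ω' i) - q k (ω' i) / 2) - (φ k (ω i) + q k (ω i) / 2))) k
  -- Step 2
  set ν : Measure (Fin n → Ω × Ω) := Measure.pi fun _ => P.prod P with hν
  have hMP := measurePreserving_arrowProdEquivProdArrow Ω Ω (Fin n) (fun _ => P) (fun _ => P)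
  let E := MeasurableEquiv.arrowProdEquivProdArrow Ω Ω (Fin n)
  have step2 : ∫ z, H z ∂(μ.prod μ) = ∫ p, H (E p) ∂ν := (hMP.integral_comp' H).symm
  let K : (Fin n → Bool) → (Fin n → Ω) → ℝ := fun ε ω =>
    smx (fun k => ∑ i, (sgB (ε i) * φ k (ω i) - q k (ω i) / 2))
  have hKm : ∀ ε, Measurable (K ε) := by
    intro ε
    refine smx_meas _ fun k => ?_
    have := hφ k
    have := hq k
    fun_prop
  have hKi : ∀ (ε), Integrable (K ε) μ := fun ε => bdd_int _ _ (n * (2 * C)) (hKm ε) fun ω =>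
    smx_abs _ _ fun k => hsumb _ _ fun i => by
      obtain ⟨h1, h2, h3, h4⟩ := habs k (ω i)
      rw [abs_le]
      cases ε i <;> simp [sgB] <;> constructor <;> linarith
  have step3 : ∀ ε : Fin n → Bool, ∫ p, H (E p) ∂ν ≤ ∫ ω, K ε ω ∂μ + ∫ ω, K (fun i => !(ε i)) ω ∂μ := by
    intro ε
    let sw : (Fin n → Ω × Ω) → (Fin n → Ω × Ω) := fun p i => (if ε i then id else Prod.swap) (p i)
    have hsw : MeasurePreserving sw ν ν := by
      refine measurePreserving_pi (fun _ => P.prod P) (fun _ => P.prod P) fun i => ?_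
      split_ifs
      · exact MeasurePreserving.id _
      · exact Measure.measurePreserving_swap
    have hf1 : MeasurePreserving (fun p : Fin n → Ω × Ω => fun i => (p i).1) ν μ :=
      measurePreserving_pi (fun _ => P.prod P) (fun _ => P) fun i => measurePreserving_fst
    have hf2 : MeasurePreserving (fun p : Fin n → Ω × Ω => fun i => (p i).2) ν μ :=
      measurePreserving_pi (fun _ => P.prod P) (fun _ => P) fun i => measurePreserving_snd
    have hHE : Measurable fun p => H (E p) := hHm.comp E.measurable
    have e1 : ∫ p, H (E p) ∂ν = ∫ p, H (E (sw p)) ∂ν := by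
      conv_lhs => rw [← hsw.map_eq]
      rw [integral_map hsw.measurable.aemeasurable hHE.aestronglyMeasurable]
    have e2 : ∫ ω, K ε ω ∂μ = ∫ p, K ε (fun i => (p i).2) ∂ν := by
      conv_lhs => rw [← hf2.map_eq]
      rw [integral_map hf2.measurable.aemeasurable (hKm ε).aestronglyMeasurable]
    have e3 : ∫ ω, K (fun i => !(ε i)) ω ∂μ = ∫ p, K (fun i => !(ε i)) (fun i => (p i).1) ∂ν := by
      conv_lhs => rw [← hf1.map_eq]
      rw [integral_map hf1.measurable.aemeasurable (hKm _).aestronglyMeasurable]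
    have i2 : Integrable (fun p : Fin n → Ω × Ω => K ε (fun i => (p i).2)) ν := hf2.integrable_comp_of_integrable (hKi ε)
    have i3 : Integrable (fun p : Fin n → Ω × Ω => K (fun i => !(ε i)) (fun i => (p i).1)) ν := hf1.integrable_comp_of_integrable (hKi (fun i => !(ε i)))
    rw [e1, e2, e3, ← integral_add i2 i3]
    refine integral_mono (bdd_int _ _ _ (hHE.comp hsw.measurable) fun p => hHb _) (i2.add i3) ?_
    intro p
    refine smx_le _ _ fun k => ?_
    refine le_trans (le_of_eq ?_) (add_le_add
      (le_smx (fun k => ∑ i, (sgB (ε i) * φ k (p i).2 - q k (p i).2 / 2)) k)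
      (le_smx (fun k => ∑ i, (sgB (!(ε i)) * φ k (p i).1 - q k (p i).1 / 2)) k))
    rw [← Finset.sum_add_distrib]
    refine Finset.sum_congr rfl fun i _ => ?_
    simp only [E, sw, MeasurableEquiv.arrowProdEquivProdArrow, Equiv.arrowProdEquivProdArrow,
      MeasurableEquiv.coe_mk, Equiv.coe_fn_mk]
    cases ε i <;> simp [sgB] <;> ring
  have hneg : ∑ ε : Fin n → Bool, ∫ ω, K (fun i => !(ε i)) ω ∂μ = ∑ ε : Fin n → Bool, ∫ ω, K ε ω ∂μ := by
    let eqv : (Fin n → Bool) ≃ (Fin n → Bool) := 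
      Equiv.piCongrRight fun _ => Equiv.boolNot
    exact Equiv.sum_comp eqv (fun ε => ∫ ω, K ε ω ∂μ)
  have step4 := Finset.sum_le_sum (s := Finset.univ) fun ε _ => step3 ε
  rw [Finset.sum_add_distrib, hneg] at step4
  simp only [Finset.sum_const, Finset.card_univ, Fintype.card_pi, Fintype.card_bool,
    Finset.prod_const, Fintype.card_fin, nsmul_eq_mul] at step4
  push_cast at step4
  calc _ ≤ 2 ^ n * ∫ p, H (E p) ∂ν := by
        rw [← step2]; gcongr
    _ ≤ _ := by rw [two_mul]; exact step4


structure PUSet {Ω α : Type*} [MeasurableSpace Ω] [MeasurableSpace α] (P : Measure Ω)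
    (X : Ω → α) (Y S : Ω → ℝ) (η e : α → ℝ) (e_m : ℝ) : Prop where
  hX : Measurable X
  hY : Measurable Y
  hS : Measurable S
  hY01 : ∀ᵐ ω ∂P, Y ω = 0 ∨ Y ω = 1
  hS01 : ∀ᵐ ω ∂P, S ω = 0 ∨ S ω = 1
  hη : IsRegression P X Y η
  he : IsPropensity P X Y S e
  hem : 0 < e_m
  hle : ∀ x, e_m ≤ e x

lemma pull {Ω α : Type*} [mΩ : MeasurableSpace Ω] [mα : MeasurableSpace α] (P : Measure Ω)
    [IsProbabilityMeasure P] (X : Ω → α) (hX : Measurable X) (F G : Ω → ℝ)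
    (hF : Integrable F P) (hG : Integrable G P)
    (h : ∀ A : Set α, MeasurableSet A → ∫ ω in X ⁻¹' A, F ω ∂P = ∫ ω in X ⁻¹' A, G ω ∂P)
    (φ : α → ℝ) (hφ : Measurable φ) (C : ℝ) (hC : ∀ x, |φ x| ≤ C) :
    ∫ ω, F ω * φ (X ω) ∂P = ∫ ω, G ω * φ (X ω) ∂P := by
  have hle : MeasurableSpace.comap X mα ≤ mΩ := hX.comap_le
  have hXm : Measurable[MeasurableSpace.comap X mα] X := comap_measurable X
  have hsm : ∀ s, MeasurableSet[MeasurableSpace.comap X mα] s → ∃ A, MeasurableSet A ∧ X ⁻¹' A = s :=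
    fun s hs => hs
  generalize MeasurableSpace.comap X mα = m at hle hXm hsm
  have h1 : P[F|m] =ᵐ[P] P[G|m] := by
    refine (ae_eq_condExp_of_forall_setIntegral_eq hle hG
      (fun s _ _ => integrable_condExp.integrableOn) ?_ stronglyMeasurable_condExp.aestronglyMeasurable)
    rintro s hs _
    rw [setIntegral_condExp hle hF hs]
    obtain ⟨A, hA, rfl⟩ := hsm s hs
    exact h A hA
  have hφm : StronglyMeasurable[m] (fun ω => φ (X ω)) :=
    (hφ.comp hXm).stronglyMeasurable
  have hb : ∀ F : Ω → ℝ, Integrable F P → Integrable (F * fun ω => φ (X ω)) P := by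
    intro F hF
    have := hF.bdd_mul (f := fun ω => φ (X ω)) (g := F) (c := C) (hφ.comp hX).aestronglyMeasurable
      (Eventually.of_forall fun ω => hC _)
    refine this.congr (Eventually.of_forall fun ω => mul_comm _ _)
  have key : ∀ F : Ω → ℝ, Integrable F P →
      ∫ ω, F ω * φ (X ω) ∂P = ∫ ω, (P[F|m]) ω * φ (X ω) ∂P := by
    intro F hF
    have e1 := condExp_mul_of_stronglyMeasurable_right hφm (hb F hF) hF
    have e2 := integral_condExp (μ := P) hle (f := F * fun ω => φ (X ω))
    rw [integral_congr_ae e1] at e2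
    exact e2.symm
  rw [key F hF, key G hG]
  refine integral_congr_ae ?_
  filter_upwards [h1] with ω hω
  rw [hω]

section
variable {Ω α : Type*} [MeasurableSpace Ω] [MeasurableSpace α] {P : Measure Ω}
    [IsProbabilityMeasure P] {X : Ω → α} {Y S : Ω → ℝ} {η e : α → ℝ} {e_m : ℝ}

def ind1 (S : Ω → ℝ) (ω : Ω) : ℝ := if S ω = 1 then 1 else 0

lemma PUSet.int_Y (H : PUSet P X Y S η e e_m) (φ : α → ℝ) (hφ : Measurable φ) (C : ℝ)
    (hC : ∀ x, |φ x| ≤ C) : ∫ ω, Y ω * φ (X ω) ∂P = ∫ ω, η (X ω) * φ (X ω) ∂P := by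
  refine pull P X H.hX Y (fun ω => η (X ω)) ?_ ?_ H.hη.2.2 φ hφ C hC
  · refine Integrable.of_bound H.hY.aestronglyMeasurable 1 ?_
    filter_upwards [H.hY01] with ω h
    rcases h with h | h <;> simp [h]
  · refine bdd_int P _ 1 (H.hη.1.comp H.hX) fun ω => ?_
    have := H.hη.2.1 (X ω)
    rw [abs_le]; constructor <;> linarith

lemma PUSet.int_S (H : PUSet P X Y S η e e_m) (φ : α → ℝ) (hφ : Measurable φ) (C : ℝ)
    (hC : ∀ x, |φ x| ≤ C) :
    ∫ ω, ind1 S ω * φ (X ω) ∂P = ∫ ω, η (X ω) * (e (X ω) * φ (X ω)) ∂P := by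
  have h1 : ∫ ω, ind1 S ω * φ (X ω) ∂P = ∫ ω, S ω * φ (X ω) ∂P := by
    refine integral_congr_ae ?_
    filter_upwards [H.hS01] with ω h
    rcases h with h | h <;> simp [h, ind1]
  have he := H.he.2.1
  have h2 : ∫ ω, S ω * φ (X ω) ∂P = ∫ ω, (e (X ω) * Y ω) * φ (X ω) ∂P := by
    refine pull P X H.hX S (fun ω => e (X ω) * Y ω) ?_ ?_ H.he.2.2.2 φ hφ C hC
    · refine Integrable.of_bound H.hS.aestronglyMeasurable 1 ?_
      filter_upwards [H.hS01] with ω h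
      rcases h with h | h <;> simp [h]
    · refine Integrable.of_bound ((H.he.1.comp H.hX).mul H.hY).aestronglyMeasurable 1 ?_
      filter_upwards [H.hY01] with ω h
      have := he (X ω)
      rcases h with h | h <;> simp [h, abs_le]
      constructor <;> linarith
  rw [h1, h2]
  have h3 := H.int_Y (fun x => e x * φ x) (H.he.1.mul hφ) C (fun x => by
    rw [abs_mul, abs_of_nonneg (he x).1]
    have := hC x
    have := abs_nonneg (φ x)
    have := he x
    nlinarith)
  rw [← h3]
  exact integral_congr_ae (Eventually.of_forall fun ω => by ring)

lemma rSAR_sub (e g g' : α → ℝ) (hg : ∀ x, g x = 0 ∨ g x = 1) (hg' : ∀ x, g' x = 0 ∨ g' x = 1)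
    (p : α × ℝ) : rSAR e g p - rSAR e g' p
      = (g p.1 - g' p.1) * (1 - 2 * ((if p.2 = 1 then (1 : ℝ) else 0) / e p.1)) := by
  unfold rSAR
  rcases hg p.1 with h | h <;> rcases hg' p.1 with h' | h' <;> simp [h, h'] <;> ring

lemma risk_eq (H : PUSet P X Y S η e e_m) (g : α → ℝ) (hg : IsClassifier g) :
    risk P X Y g = ∫ ω, Y ω ∂P + ∫ ω, g (X ω) * (1 - 2 * η (X ω)) ∂P := by
  have hms : MeasurableSet {ω | g (X ω) ≠ Y ω} :=
    (measurableSet_eq_fun (hg.1.comp H.hX) H.hY).compl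
  have h1 : risk P X Y g = ∫ ω, (Y ω + (g (X ω) - 2 * (Y ω * g (X ω)))) ∂P := by
    unfold risk
    have : (P {ω | g (X ω) ≠ Y ω}).toReal = P.real {ω | g (X ω) ≠ Y ω} := rfl
    rw [this, ← integral_indicator_one hms]
    refine integral_congr_ae ?_
    filter_upwards [H.hY01] with ω h
    rcases h with h | h <;> rcases hg.2 (X ω) with h' | h' <;> simp [Set.indicator, h, h'] <;> norm_num
  have hYi : Integrable Y P := by
    refine Integrable.of_bound H.hY.aestronglyMeasurable 1 ?_
    filter_upwards [H.hY01] with ω h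
    rcases h with h | h <;> simp [h]
  have hgb : ∀ x, |g x| ≤ 1 := fun x => by rcases hg.2 x with h | h <;> simp [h]
  have hgi : Integrable (fun ω => g (X ω)) P := bdd_int P _ 1 (hg.1.comp H.hX) fun ω => hgb _
  have hYg : Integrable (fun ω => Y ω * g (X ω)) P := by
    refine Integrable.of_bound (H.hY.mul (hg.1.comp H.hX)).aestronglyMeasurable 1 ?_
    filter_upwards [H.hY01] with ω h
    rcases h with h | h <;> simp [h, hgb]
  have hηg : Integrable (fun ω => η (X ω) * g (X ω)) P := by
    refine bdd_int P _ 1 ((H.hη.1.comp H.hX).mul (hg.1.comp H.hX)) fun ω => ?_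
    have := H.hη.2.1 (X ω)
    rcases hg.2 (X ω) with h | h <;> simp [h, abs_le]
    constructor <;> linarith
  have hsub : Integrable (fun ω => g (X ω) - 2*(Y ω * g (X ω))) P := hgi.sub (hYg.const_mul 2)
  rw [h1, integral_add hYi hsub, integral_sub hgi (hYg.const_mul 2),
    integral_const_mul, H.int_Y g hg.1 1 hgb, ← integral_const_mul, ← integral_sub hgi (hηg.const_mul 2)]
  congr 1
  exact integral_congr_ae (Eventually.of_forall fun ω => by ring)

lemma bayes_cl (hη : Measurable η) : IsClassifier (bayes η) := by
  refine ⟨Measurable.ite (measurableSet_le measurable_const hη) measurable_const measurable_const, fun x => ?_⟩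
  unfold bayes
  split_ifs <;> simp

/-- SAR weight -/
def wt (X : Ω → α) (S : Ω → ℝ) (e : α → ℝ) (ω : Ω) : ℝ := 1 - 2 * (ind1 S ω / e (X ω))

lemma ind1_meas (hS : Measurable S) : Measurable (ind1 S) :=
  Measurable.ite (hS (measurableSet_singleton 1)) measurable_const measurable_const

lemma PUSet.wt_meas (H : PUSet P X Y S η e e_m) : Measurable (wt X S e) :=
  measurable_const.sub (((ind1_meas H.hS).div (H.he.1.comp H.hX)).const_mul 2)

lemma PUSet.wt_bd (H : PUSet P X Y S η e e_m) (ω : Ω) :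
    1 ≤ |wt X S e ω| ∧ |wt X S e ω| ≤ 2 / e_m := by
  have h1 := H.hle (X ω)
  have h2 := (H.he.2.1 (X ω)).2
  have h0 := H.hem
  have h3 : 0 < e (X ω) := h0.trans_le h1
  unfold wt ind1
  split_ifs
  · have h4 : 1 ≤ 1 / e (X ω) := by rw [le_div_iff₀ h3]; linarith
    have h5 : 1 / e (X ω) ≤ 1 / e_m := by gcongr
    rw [abs_of_nonpos (by linarith)]
    have : 2 / e_m = 2 * (1 / e_m) := by ring
    constructor <;> linarith
  · have : 1 ≤ 2 / e_m := by rw [le_div_iff₀ h0]; linarith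
    simpa using this

lemma PUSet.em_le (H : PUSet P X Y S η e e_m) : e_m ≤ 1 := by
  obtain ⟨ω⟩ : Nonempty Ω := by
    by_contra h
    rw [not_nonempty_iff] at h
    have := measure_univ (μ := P)
    rw [Set.univ_eq_empty_iff.2 h] at this
    simp at this
  exact (H.hle (X ω)).trans (H.he.2.1 (X ω)).2

lemma PUSet.excess_eq (H : PUSet P X Y S η e e_m) (g : α → ℝ) (hg : IsClassifier g) :
    excessRisk P X Y η g = ∫ ω, (g (X ω) - bayes η (X ω)) * (1 - 2 * η (X ω)) ∂P := by
  have hb := bayes_cl H.hη.1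
  have hi : ∀ g : α → ℝ, IsClassifier g → Integrable (fun ω => g (X ω) * (1 - 2 * η (X ω))) P := by
    intro g hg
    refine bdd_int P _ 1 ((hg.1.comp H.hX).mul (measurable_const.sub ((H.hη.1.comp H.hX).const_mul 2))) fun ω => ?_
    have := H.hη.2.1 (X ω)
    rcases hg.2 (X ω) with h | h <;> simp [h, abs_le]
    constructor <;> linarith
  unfold excessRisk
  rw [risk_eq H g hg, risk_eq H _ hb]
  rw [add_sub_add_left_eq_sub, ← integral_sub (hi g hg) (hi _ hb)]
  exact integral_congr_ae (Eventually.of_forall fun ω => by ring)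

lemma PUSet.excess_eq' (H : PUSet P X Y S η e e_m) (g : α → ℝ) (hg : IsClassifier g) :
    excessRisk P X Y η g = ∫ ω, (g (X ω) - bayes η (X ω)) * wt X S e ω ∂P := by
  have hb := bayes_cl H.hη.1
  have hepos : ∀ x, 0 < e x := fun x => H.hem.trans_le (H.hle x)
  have hd : ∀ x, |g x - bayes η x| ≤ 1 := fun x => by
    rcases hg.2 x with h | h <;> rcases hb.2 x with h' | h' <;> simp [h, h']
  have hφm : Measurable fun x => (g x - bayes η x) / e x := (hg.1.sub hb.1).div H.he.1
  have hφb : ∀ x, |(g x - bayes η x) / e x| ≤ 1 / e_m := fun x => by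
    rw [abs_div, abs_of_pos (hepos x)]
    have := H.hem
    have := H.hle x
    have := hd x
    gcongr
  have h1 := H.int_S _ hφm _ hφb
  have hdi : Integrable (fun ω => g (X ω) - bayes η (X ω)) P :=
    bdd_int P _ 1 ((hg.1.comp H.hX).sub (hb.1.comp H.hX)) fun ω => hd _
  have hsi : Integrable (fun ω => ind1 S ω * ((g (X ω) - bayes η (X ω)) / e (X ω))) P := by
    refine bdd_int P _ (1 / e_m) ((ind1_meas H.hS).mul (hφm.comp H.hX)) fun ω => ?_
    have h5 := hφb (X ω)
    have : 0 ≤ 1 / e_m := by have := H.hem; positivity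
    unfold ind1
    split_ifs <;> simp at h5 ⊢ <;> first | exact h5 | exact H.hem.le
  have hηi : Integrable (fun ω => η (X ω) * (e (X ω) * ((g (X ω) - bayes η (X ω)) / e (X ω)))) P := by
    refine bdd_int P _ 1 ((H.hη.1.comp H.hX).mul ((H.he.1.comp H.hX).mul (hφm.comp H.hX))) fun ω => ?_
    rw [mul_div_cancel₀ _ (hepos _).ne', abs_mul, abs_of_nonneg (H.hη.2.1 _).1]
    have := hd (X ω)
    have := H.hη.2.1 (X ω)
    have := abs_nonneg (g (X ω) - bayes η (X ω))
    nlinarith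
  rw [H.excess_eq g hg]
  have e1 : ∫ ω, (g (X ω) - bayes η (X ω)) * wt X S e ω ∂P
      = ∫ ω, ((g (X ω) - bayes η (X ω)) - 2 * (ind1 S ω * ((g (X ω) - bayes η (X ω)) / e (X ω)))) ∂P :=
    integral_congr_ae (Eventually.of_forall fun ω => by simp only [wt]; ring)
  rw [e1, integral_sub hdi (hsi.const_mul 2), integral_const_mul, h1, ← integral_const_mul,
    ← integral_sub hdi (hηi.const_mul 2)]
  refine integral_congr_ae (Eventually.of_forall fun ω => ?_)
  simp only
  rw [mul_div_cancel₀ _ (hepos _).ne']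
  ring

lemma PUSet.excess_ge (H : PUSet P X Y S η e e_m) (g : α → ℝ) (hg : IsClassifier g) (h : ℝ)
    (hh : ∀ x, h ≤ |2 * η x - 1|) :
    h * ∫ ω, |g (X ω) - bayes η (X ω)| ∂P ≤ excessRisk P X Y η g := by
  have hb := bayes_cl H.hη.1
  rw [H.excess_eq g hg, ← integral_const_mul]
  refine integral_mono ?_ ?_ ?_
  · refine (bdd_int P _ 1 ((hg.1.comp H.hX).sub (hb.1.comp H.hX)).abs fun ω => ?_).const_mul h
    rcases hg.2 (X ω) with h | h <;> rcases hb.2 (X ω) with h' | h' <;> simp [h, h']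
  · refine bdd_int P _ 1 (((hg.1.comp H.hX).sub (hb.1.comp H.hX)).mul
      (measurable_const.sub ((H.hη.1.comp H.hX).const_mul 2))) fun ω => ?_
    have := H.hη.2.1 (X ω)
    rcases hg.2 (X ω) with h | h <;> rcases hb.2 (X ω) with h' | h' <;> simp [h, h', abs_le] <;>
      constructor <;> linarith
  · intro ω
    have h1 := hh (X ω)
    simp only [bayes]
    split_ifs with hc
    · rw [abs_of_nonneg (by linarith)] at h1
      rcases hg.2 (X ω) with h | h <;> simp [h]
      linarith
    · rw [abs_of_nonpos (by linarith)] at h1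
      rcases hg.2 (X ω) with h | h <;> simp [h]
      linarith

lemma PUSet.wt_sq (H : PUSet P X Y S η e e_m) (φ : α → ℝ) (hφ : Measurable φ)
    (hφ0 : ∀ x, 0 ≤ φ x ∧ φ x ≤ 1) :
    ∫ ω, wt X S e ω ^ 2 * φ (X ω) ∂P ≤ 5 / e_m * ∫ ω, φ (X ω) ∂P := by
  have hepos : ∀ x, 0 < e x := fun x => H.hem.trans_le (H.hle x)
  have hem := H.hem
  have hψm : Measurable fun x => (4 / e x ^ 2 - 4 / e x) * φ x :=
    ((measurable_const.div (H.he.1.pow_const 2)).sub (measurable_const.div H.he.1)).mul hφ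
  have hψ0 : ∀ x, 0 ≤ (4 / e x ^ 2 - 4 / e x) * φ x := fun x => by
    refine mul_nonneg ?_ (hφ0 x).1
    rw [sub_nonneg]
    have := hepos x
    have := (H.he.2.1 x).2
    gcongr
    nlinarith
  have hψb : ∀ x, |(4 / e x ^ 2 - 4 / e x) * φ x| ≤ 4 / e_m ^ 2 := fun x => by
    rw [abs_of_nonneg (hψ0 x)]
    have h1 : 4 / e x ^ 2 ≤ 4 / e_m ^ 2 := by
      have := H.hle x
      gcongr
    have h2 : 0 ≤ 4 / e x := by have := hepos x; positivity
    have h3 := hψ0 x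
    have h4 := hφ0 x
    have h5 : 0 ≤ 4 / e_m ^ 2 := by positivity
    nlinarith
  have h1 := H.int_S _ hψm _ hψb
  have hφi : Integrable (fun ω => φ (X ω)) P := bdd_int P _ 1 (hφ.comp H.hX) fun ω => by
    rw [abs_of_nonneg (hφ0 _).1]; exact (hφ0 _).2
  have hsi : Integrable (fun ω => ind1 S ω * ((4 / e (X ω) ^ 2 - 4 / e (X ω)) * φ (X ω))) P := by
    refine bdd_int P _ (4 / e_m ^ 2) ((ind1_meas H.hS).mul (hψm.comp H.hX)) fun ω => ?_
    have h5 := hψb (X ω)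
    have : 0 ≤ 4 / e_m ^ 2 := by positivity
    unfold ind1
    split_ifs
    · simpa using h5
    · simpa using this
  have e1 : ∫ ω, wt X S e ω ^ 2 * φ (X ω) ∂P
      = ∫ ω, (φ (X ω) + ind1 S ω * ((4 / e (X ω) ^ 2 - 4 / e (X ω)) * φ (X ω))) ∂P := by
    refine integral_congr_ae (Eventually.of_forall fun ω => ?_)
    have := hepos (X ω)
    simp only [wt, ind1]
    split_ifs
    · field_simp; ring
    · ring
  rw [e1, integral_add hφi hsi, h1, ← integral_add hφi, ← integral_const_mul]
  · have hpt : ∀ ω, 0 ≤ η (X ω) * (e (X ω) * ((4 / e (X ω) ^ 2 - 4 / e (X ω)) * φ (X ω))) :=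
      fun ω => mul_nonneg (H.hη.2.1 _).1 (mul_nonneg (hepos _).le (hψ0 _))
    refine integral_mono_of_nonneg (Eventually.of_forall fun ω => add_nonneg (hφ0 _).1 (hpt ω))
      (hφi.const_mul _) (Eventually.of_forall fun ω => ?_)
    have he := hepos (X ω)
    have hη := H.hη.2.1 (X ω)
    have hf := hφ0 (X ω)
    have e2 : e (X ω) * ((4 / e (X ω) ^ 2 - 4 / e (X ω)) * φ (X ω)) = (4 / e (X ω) - 4) * φ (X ω) := by
      field_simp
    simp only
    rw [e2]
    have h3 : 4 / e (X ω) ≤ 4 / e_m := by have := H.hle (X ω); gcongr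
    have h4 : 4 ≤ 4 / e (X ω) := by rw [le_div_iff₀ he]; have := (H.he.2.1 (X ω)).2; linarith
    have h5 : 1 ≤ 1 / e_m := by rw [le_div_iff₀ hem]; have := H.em_le; linarith
    have h6 : η (X ω) * (4 / e (X ω) - 4) ≤ 4 / e_m := by nlinarith
    have h7 : (5 : ℝ) / e_m = 1 / e_m + 4 / e_m := by ring
    rw [h7]
    nlinarith
  · refine bdd_int P _ (e_m⁻¹ ^ 2 * 4) ((H.hη.1.comp H.hX).mul ((H.he.1.comp H.hX).mul (hψm.comp H.hX))) fun ω => ?_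
    have h5 := hψb (X ω)
    rw [abs_mul, abs_mul, abs_of_nonneg (H.hη.2.1 _).1, abs_of_nonneg (H.he.2.1 _).1]
    have h6 : 4 / e_m ^ 2 = e_m⁻¹ ^ 2 * 4 := by field_simp
    rw [← h6]
    refine le_trans ?_ h5
    have h7 := abs_nonneg ((4 / e (X ω) ^ 2 - 4 / e (X ω)) * φ (X ω))
    have h8 := H.hη.2.1 (X ω)
    have h9 := H.he.2.1 (X ω)
    have h10 : η (X ω) * e (X ω) ≤ 1 := by nlinarith
    rw [← mul_assoc]
    nlinarith
end


lemma log_tan (x m : ℝ) (hx : 0 ≤ x) (hm : 0 ≤ m) :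
    log (1 + x) ≤ log (1 + m) + (x - m) / (1 + m) := by
  have h1 : log (1 + x) - log (1 + m) = log ((1 + x) / (1 + m)) := by
    rw [log_div (by positivity) (by positivity)]
  have h2 := log_le_sub_one_of_pos (x := (1 + x) / (1 + m)) (by positivity)
  have h3 : (1 + x) / (1 + m) - 1 = (x - m) / (1 + m) := by
    field_simp; ring
  linarith

lemma fin_core {Ω : Type} [MeasurableSpace Ω] (P : Measure Ω) [IsProbabilityMeasure P]
    {n V N : ℕ} (hV : 0 < V) (u σ : Ω → ℝ) (hu : Measurable u) (hσ : Measurable σ) (C : ℝ)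
    (hu1 : ∀ ω, 1 ≤ |u ω|) (huC : ∀ ω, |u ω| ≤ C) (hσ1 : ∀ ω, |σ ω| = 1)
    (t : Fin (N + 1) → Ω → Bool) (ht : ∀ k, Measurable fun ω => btB (t k ω))
    (hNS : ∀ j : Fin (V + 1) → Ω, ∃ c : Fin (V + 1) → Bool, ∀ k, ∃ i, t k (j i) ≠ c i)
    (a : ℝ) (ha : 0 < a) (hau : ∀ ω, a * |u ω| ≤ 1) (D : ℝ) (hD : ∫ ω, u ω ^ 2 ∂P ≤ D) :
    ∫ ω, smx (fun k => ∑ i : Fin n, ((∫ x, (2 * (σ x * u x * btB (t k x)) - a * u x ^ 2 * btB (t k x)) ∂P)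
        - 2 * (σ (ω i) * u (ω i) * btB (t k (ω i))))) ∂(Measure.pi fun _ => P)
      ≤ 2 * (18 * V / a * (30 + 5 * log (1 + a ^ 2 / 36 * n * D / V))) := by
  have hVr : (0 : ℝ) < V := by exact_mod_cast hV
  have hbt : ∀ c, 0 ≤ btB c ∧ btB c ≤ 1 := by intro c; cases c <;> simp [btB]
  set v : Ω → ℝ := fun ω => 2 * (σ ω * u ω) - a / 2 * u ω ^ 2 with hv
  have hvm : Measurable v := ((hσ.mul hu).const_mul 2).sub ((hu.pow_const 2).const_mul _)
  have hvb : ∀ ω, |v ω| ≤ 3 * |u ω| := by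
    intro ω
    have h1 : |2 * (σ ω * u ω)| = 2 * |u ω| := by rw [abs_mul, abs_mul, hσ1]; simp
    have h2 : |a / 2 * u ω ^ 2| = (a * |u ω|) * |u ω| / 2 := by
      rw [abs_mul, abs_of_pos (by positivity : 0 < a / 2), abs_pow]; ring
    have h3 : (a * |u ω|) * |u ω| ≤ 1 * |u ω| := mul_le_mul_of_nonneg_right (hau ω) (abs_nonneg _)
    have := abs_sub (2 * (σ ω * u ω)) (a / 2 * u ω ^ 2)
    have := abs_nonneg (u ω)
    simp only [hv]
    linarith
  have hC0 : 1 ≤ C ∨ IsEmpty Ω := by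
    rcases isEmpty_or_nonempty Ω with h | ⟨⟨ω⟩⟩
    · exact Or.inr h
    · exact Or.inl ((hu1 ω).trans (huC ω))
  have hpow : ∀ ω, u ω ^ 2 ≤ C ^ 2 := fun ω => by
    rw [← sq_abs (u ω)]
    exact pow_le_pow_left₀ (abs_nonneg _) (huC ω) 2
  have hui : Integrable (fun ω => u ω ^ 2) P := bdd_int P _ (C ^ 2) (hu.pow_const 2) fun ω => by
    rw [abs_of_nonneg (sq_nonneg _)]; exact hpow ω
  set φ : Fin (N + 1) → Ω → ℝ := fun k ω => v ω * btB (t k ω) with hφ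
  set q : Fin (N + 1) → Ω → ℝ := fun k ω => a * u ω ^ 2 * btB (t k ω) with hq
  have hφm : ∀ k, Measurable (φ k) := fun k => hvm.mul (ht k)
  have hqm : ∀ k, Measurable (q k) := fun k => ((hu.pow_const 2).const_mul a).mul (ht k)
  have hφb : ∀ k ω, |φ k ω| ≤ 3 * |C| + a * C ^ 2 := by
    intro k ω
    simp only [hφ]
    rw [abs_mul, abs_of_nonneg (hbt _).1]
    have h1 := hvb ω
    have h2 := huC ω
    have h3 := le_abs_self C
    have h4 := hbt (t k ω)
    have h5 := abs_nonneg (v ω)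
    have h6 : 0 ≤ a * C ^ 2 := by positivity
    nlinarith
  have hqb : ∀ k ω, |q k ω| ≤ 3 * |C| + a * C ^ 2 := by
    intro k ω
    simp only [hq]
    rw [abs_of_nonneg (mul_nonneg (by positivity) (hbt _).1)]
    have h1 : a * u ω ^ 2 ≤ a * C ^ 2 := mul_le_mul_of_nonneg_left (hpow ω) ha.le
    have h4 := hbt (t k ω)
    have h5 : 0 ≤ a * u ω ^ 2 := by positivity
    have := abs_nonneg C
    nlinarith
  have hs := symm_aux (n := n) P φ q hφm hqm _ hφb hqb
  have e1 : ∀ ω : Fin n → Ω, (fun k => ∑ i : Fin n, ((∫ x, (2 * (σ x * u x * btB (t k x)) - a * u x ^ 2 * btB (t k x)) ∂P)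
        - 2 * (σ (ω i) * u (ω i) * btB (t k (ω i))))) =
      (fun k => ∑ i, ((∫ x, (φ k x - q k x/2) ∂P) - (φ k (ω i) + q k (ω i)/2))) := by
    intro ω
    funext k
    refine Finset.sum_congr rfl fun i _ => ?_
    congr 1
    · refine integral_congr_ae (Eventually.of_forall fun x => ?_)
      simp only [hφ, hq, hv]; ring
    · simp only [hφ, hq, hv]; ring
  simp_rw [e1]
  set b : ℝ := a / 18 with hb
  have hbp : 0 < b := by positivity
  set m : ℝ := a ^ 2 / 36 * n * D / V with hm
  have hD0 : 0 ≤ D := le_trans (integral_nonneg fun ω => sq_nonneg _) hD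
  have hm0 : 0 ≤ m := by positivity
  set G : (Fin n → Ω) → ℝ := fun ω => b ^ 2 * (∑ i, (3 * |u (ω i)|) ^ 2) / V with hG
  have hG0 : ∀ ω, 0 ≤ G ω := fun ω => by positivity
  have hevi : ∀ i : Fin n, Integrable (fun ω : Fin n → Ω => u (ω i) ^ 2) (Measure.pi fun _ => P) := fun i =>
    bdd_int _ _ (C ^ 2) ((hu.comp (measurable_pi_apply i)).pow_const 2) fun ω => by
      rw [abs_of_nonneg (sq_nonneg _)]; exact hpow _
  have hev : ∀ i : Fin n, ∫ ω : Fin n → Ω, u (ω i) ^ 2 ∂(Measure.pi fun _ => P) = ∫ ω, u ω ^ 2 ∂P := by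
    intro i
    have := (measurePreserving_eval (fun _ : Fin n => P) i)
    have h2 := integral_map (μ := Measure.pi fun _ : Fin n => P) (φ := Function.eval i)
      (measurable_pi_apply i).aemeasurable (f := fun ω => u ω ^ 2) (hu.pow_const 2).aestronglyMeasurable
    rw [this.map_eq] at h2
    exact h2.symm
  have hGe : G = fun ω => (9 * b ^ 2 / V) * ∑ i, u (ω i) ^ 2 := by
    funext ω
    simp only [hG, mul_pow, sq_abs, ← Finset.mul_sum]
    ring
  have hGi : Integrable G (Measure.pi fun _ : Fin n => P) := by
    rw [hGe]
    exact (integrable_finset_sum _ fun i _ => hevi i).const_mul _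
  have hGm : ∫ ω, G ω ∂(Measure.pi fun _ : Fin n => P) ≤ m := by
    rw [hGe, integral_const_mul, integral_finset_sum _ fun i _ => hevi i]
    simp_rw [hev]
    rw [Finset.sum_const, Finset.card_univ, Fintype.card_fin, nsmul_eq_mul, hm, hb]
    have : a ^ 2 / 36 * n * D / V = 9 * (a / 18) ^ 2 / V * (n * D) := by ring
    rw [this]
    gcongr
  have hpt : ∀ ω : Fin n → Ω, ∑ ε : Fin n → Bool, smx (fun k => ∑ i, (sgB (ε i) * φ k (ω i) - q k (ω i)/2))
      ≤ 2 ^ n * (V / b * (30 + 5 * (log (1 + m) + (G ω - m) / (1 + m)))) := by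
    intro ω
    classical
    set T : Finset (Fin n → Bool) := Finset.univ.image fun k i => t k (ω i) with hT
    have hTs : NoSh T V := by
      intro j
      obtain ⟨c, hc⟩ := hNS fun i => ω (j i)
      refine ⟨c, fun s hs => ?_⟩
      rw [hT, Finset.mem_image] at hs
      obtain ⟨k, _, rfl⟩ := hs
      exact hc k
    obtain ⟨M, hM1, hM2⟩ := chain (fun i => 3 * |u (ω i)|) (fun i => v (ω i))
      (fun i => by have := hu1 (ω i); linarith) (fun i => hvb (ω i)) T hTs hV
      (by rw [hT]; exact Finset.univ_nonempty.image _) b hbp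
    have h1 : ∑ ε : Fin n → Bool, smx (fun k => ∑ i, (sgB (ε i) * φ k (ω i) - q k (ω i)/2)) ≤ ∑ ε, M ε := by
      refine Finset.sum_le_sum fun ε _ => smx_le _ _ fun k => ?_
      refine le_trans (le_of_eq ?_) (hM1 (fun i => t k (ω i)) (Finset.mem_image_of_mem _ (Finset.mem_univ k)) ε)
      refine Finset.sum_congr rfl fun i _ => ?_
      simp only [hφ, hq, hb, mul_pow, sq_abs]; ring
    refine h1.trans (hM2.trans ?_)
    have := log_tan (G ω) m (hG0 ω) hm0
    gcongr
  have hpow2 : (0 : ℝ) < 2 ^ n := by positivity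
  have hinte : ∀ ε : Fin n → Bool, Integrable (fun ω : Fin n → Ω => smx (fun k => ∑ i, (sgB (ε i) * φ k (ω i) - q k (ω i)/2)))
      (Measure.pi fun _ => P) := by
    intro ε
    refine bdd_int _ _ (∑ i : Fin n, (2 * (3 * |C| + a * C ^ 2))) (smx_meas _ fun k => ?_) fun ω => smx_abs _ _ fun k => ?_
    · refine Finset.measurable_sum _ fun i _ => ?_
      exact (((hφm k).comp (measurable_pi_apply i)).const_mul _).sub (((hqm k).comp (measurable_pi_apply i)).div_const 2)
    · refine (Finset.abs_sum_le_sum_abs _ _).trans (Finset.sum_le_sum fun i _ => ?_)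
      have h1 := hφb k (ω i)
      have h2 := hqb k (ω i)
      have h3 : |sgB (ε i) * φ k (ω i)| = |φ k (ω i)| := by
        rw [abs_mul]; cases ε i <;> simp [sgB]
      have h4 : |q k (ω i) / 2| = |q k (ω i)| / 2 := by rw [abs_div]; simp
      have := abs_sub (sgB (ε i) * φ k (ω i)) (q k (ω i) / 2)
      have := abs_nonneg (q k (ω i))
      linarith
  rw [← integral_finset_sum _ fun ε _ => hinte ε] at hs
  have hRi : Integrable (fun ω => 2 ^ n * (V / b * (30 + 5 * (log (1 + m) + (G ω - m) / (1 + m))))) (Measure.pi fun _ : Fin n => P) :=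
    (((integrable_const _).add (((integrable_const _).add ((hGi.sub (integrable_const _)).div_const _)).const_mul 5)).const_mul _).const_mul _
  have h1 := integral_mono (integrable_finset_sum _ fun ε _ => hinte ε) hRi hpt
  have e2 : (fun ω => 2 ^ n * (V / b * (30 + 5 * (log (1 + m) + (G ω - m) / (1 + m)))))
     = fun ω => (2 ^ n * (V / b * (30 + 5 * (log (1 + m) - m / (1 + m))))) + (2 ^ n * (V / b * (5 / (1 + m)))) * G ω := by
    funext ω; ring
  have h2 : ∫ ω, 2 ^ n * (V / b * (30 + 5 * (log (1 + m) + (G ω - m) / (1 + m)))) ∂(Measure.pi fun _ : Fin n => P)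
      ≤ 2 ^ n * (V / b * (30 + 5 * log (1 + m))) := by
    rw [e2, integral_add (integrable_const _) (hGi.const_mul _)]
    have : (2 ^ n * (V / b * (5 / (1 + m)))) * ∫ ω, G ω ∂(Measure.pi fun _ : Fin n => P) ≤ (2 ^ n * (V / b * (5 / (1 + m)))) * m := by
      gcongr
    simp only [integral_const_mul, integral_const, probReal_univ, one_smul]
    refine (add_le_add_right this _).trans (le_of_eq ?_)
    ring
  have e3 : (V : ℝ) / b = 18 * V / a := by rw [hb]; field_simp
  rw [e3] at h1 h2
  have h3 := hs.trans (mul_le_mul_of_nonneg_left (h1.trans h2) (by norm_num : (0 : ℝ) ≤ 2))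
  refine le_of_mul_le_mul_left (h3.trans (le_of_eq ?_)) hpow2
  ring


lemma sup_lim {Ω : Type*} [MeasurableSpace Ω] (Q : Measure Ω) [IsProbabilityMeasure Q]
    (A : ℕ → Ω → ℝ) (hA : ∀ k, Measurable (A k)) (C : ℝ) (hC : ∀ k ω, |A k ω| ≤ C) (B : ℝ)
    (hB : ∀ N : ℕ, ∫ ω, smx (fun k : Fin (N + 1) => A k ω) ∂Q ≤ B) :
    ∃ F : Ω → ℝ, Integrable F Q ∧ ∫ ω, F ω ∂Q ≤ B ∧ ∀ k ω, A k ω ≤ F ω := by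
  set M : ℕ → Ω → ℝ := fun N ω => smx (fun k : Fin (N + 1) => A k ω) with hM
  have hMm : ∀ N, Measurable (M N) := fun N => smx_meas _ fun k => hA k
  have hMC : ∀ N ω, |M N ω| ≤ C := fun N ω => smx_abs _ _ fun k => hC k ω
  have hmono : ∀ ω, Monotone fun N => M N ω := fun ω N N' h =>
    smx_le _ _ fun k => le_smx (fun k : Fin (N' + 1) => A k ω) ⟨k, by have := k.2; omega⟩
  have hbdd : ∀ ω, BddAbove (Set.range fun N => M N ω) := fun ω =>
    ⟨C, by rintro _ ⟨N, rfl⟩; exact le_of_abs_le (hMC N ω)⟩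
  have htend : ∀ ω, Tendsto (fun N => M N ω) atTop (𝓝 (⨆ N, M N ω)) := fun ω =>
    tendsto_atTop_ciSup (hmono ω) (hbdd ω)
  have hFm : Measurable fun ω => ⨆ N, M N ω :=
    measurable_of_tendsto_metrizable hMm (tendsto_pi_nhds.2 htend)
  refine ⟨fun ω => ⨆ N, M N ω, ?_, ?_, ?_⟩
  · refine bdd_int Q _ C hFm fun ω => ?_
    exact le_of_tendsto (htend ω).abs (Eventually.of_forall fun N => hMC N ω)
  · have := tendsto_integral_of_dominated_convergence (μ := Q) (F := M) (f := fun ω => ⨆ N, M N ω)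
      (fun _ => C) (fun N => (hMm N).aestronglyMeasurable) (integrable_const _)
      (fun N => Eventually.of_forall fun ω => hMC N ω) (Eventually.of_forall htend)
    exact le_of_tendsto this (Eventually.of_forall hB)
  · intro k ω
    exact (le_smx (fun k : Fin (k + 1) => A k ω) (Fin.last k)).trans (le_ciSup (hbdd ω) k)

section
variable {Ω : Type} {α : Type} [MeasurableSpace Ω] [MeasurableSpace α] {P : Measure Ω}
    [IsProbabilityMeasure P] {X : Ω → α} {Y S : Ω → ℝ} {η e : α → ℝ} {e_m : ℝ}

/-- penalised loss -/
def pl (X : Ω → α) (S : Ω → ℝ) (η e : α → ℝ) (a : ℝ) (g : α → ℝ) (x : Ω) : ℝ :=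
  2 * ((g (X x) - bayes η (X x)) * wt X S e x) - a * wt X S e x ^ 2 * |g (X x) - bayes η (X x)|

/-- penalised process -/
def AA (P : Measure Ω) (X : Ω → α) (S : Ω → ℝ) (η e : α → ℝ) (a : ℝ) {n : ℕ} (g : α → ℝ)
    (ω : Fin n → Ω) : ℝ :=
  ∑ i : Fin n, ((∫ x, pl X S η e a g x ∂P)
    - 2 * ((g (X (ω i)) - bayes η (X (ω i))) * wt X S e (ω i)))

lemma d_abs {g g' : α → ℝ} (hg : IsClassifier g) (hg' : IsClassifier g') (x : α) : |g x - g' x| ≤ 1 := by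
  rcases hg.2 x with h | h <;> rcases hg'.2 x with h' | h' <;> simp [h, h']

lemma PUSet.pl_meas (H : PUSet P X Y S η e e_m) (a : ℝ) (g : α → ℝ) (hg : IsClassifier g) :
    Measurable (pl X S η e a g) := by
  have hd : Measurable fun x => g (X x) - bayes η (X x) :=
    (hg.1.comp H.hX).sub ((bayes_cl H.hη.1).1.comp H.hX)
  exact ((hd.mul H.wt_meas).const_mul 2).sub (((H.wt_meas.pow_const 2).const_mul a).mul hd.abs)

lemma PUSet.pl_bd (H : PUSet P X Y S η e e_m) (a : ℝ) (ha : 0 ≤ a) (g : α → ℝ) (hg : IsClassifier g)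
    (x : Ω) : |pl X S η e a g x| ≤ 2 * (2 / e_m) + a * (2 / e_m) ^ 2 := by
  have h1 := d_abs hg (bayes_cl H.hη.1) (X x)
  have h2 := (H.wt_bd x).2
  unfold pl
  refine (abs_sub _ _).trans (add_le_add ?_ ?_)
  · rw [abs_mul, abs_mul, abs_two]
    have := abs_nonneg (wt X S e x)
    have := abs_nonneg (g (X x) - bayes η (X x))
    nlinarith
  · rw [abs_mul, abs_mul, abs_pow, abs_abs, abs_of_nonneg ha]
    have h3 : |wt X S e x| ^ 2 ≤ (2 / e_m) ^ 2 := pow_le_pow_left₀ (abs_nonneg _) h2 2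
    have h4 : a * |wt X S e x| ^ 2 ≤ a * (2 / e_m) ^ 2 := mul_le_mul_of_nonneg_left h3 ha
    have h5 : 0 ≤ a * |wt X S e x| ^ 2 := by positivity
    nlinarith

lemma PUSet.AA_bd (H : PUSet P X Y S η e e_m) (a : ℝ) (ha : 0 ≤ a) (g : α → ℝ) (hg : IsClassifier g)
    {n : ℕ} (ω : Fin n → Ω) :
    |AA P X S η e a g ω| ≤ n * ((2 * (2 / e_m) + a * (2 / e_m) ^ 2) + 2 * (2 / e_m)) := by
  unfold AA
  refine (Finset.abs_sum_le_sum_abs _ _).trans ?_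
  rw [show (n : ℝ) * ((2 * (2 / e_m) + a * (2 / e_m) ^ 2) + 2 * (2 / e_m))
    = ∑ i : Fin n, ((2 * (2 / e_m) + a * (2 / e_m) ^ 2) + 2 * (2 / e_m)) by
      rw [Finset.sum_const, Finset.card_univ, Fintype.card_fin, nsmul_eq_mul]]
  refine Finset.sum_le_sum fun i _ => (abs_sub _ _).trans (add_le_add ?_ ?_)
  · have := norm_integral_le_of_norm_le_const (μ := P) (f := pl X S η e a g) (C := 2 * (2 / e_m) + a * (2 / e_m) ^ 2)
      (Eventually.of_forall fun x => H.pl_bd a ha g hg x)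
    simpa using this
  · rw [abs_mul, abs_mul, abs_two]
    have h1 := d_abs hg (bayes_cl H.hη.1) (X (ω i))
    have h2 := (H.wt_bd (ω i)).2
    have := abs_nonneg (wt X S e (ω i))
    have := abs_nonneg (g (X (ω i)) - bayes η (X (ω i)))
    nlinarith

lemma PUSet.AA_meas (H : PUSet P X Y S η e e_m) (a : ℝ) (g : α → ℝ) (hg : IsClassifier g)
    {n : ℕ} : Measurable (AA P X S η e a g : (Fin n → Ω) → ℝ) := by
  have hd : Measurable fun x => g (X x) - bayes η (X x) :=
    (hg.1.comp H.hX).sub ((bayes_cl H.hη.1).1.comp H.hX)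
  refine Finset.measurable_sum _ fun i _ => measurable_const.sub (Measurable.const_mul ?_ 2)
  exact (hd.mul H.wt_meas).comp (measurable_pi_apply i)

open Classical in
lemma PUSet.fin_bound (H : PUSet P X Y S η e e_m) (𝒮 : Set (α → ℝ)) (h𝒮 : ∀ g ∈ 𝒮, IsClassifier g)
    {V n N : ℕ} (hVC : HasVCDim 𝒮 V) (hV : 0 < V) (a : ℝ) (ha : 0 < a) (ha2 : a * (2 / e_m) ≤ 1)
    (g : Fin (N + 1) → α → ℝ) (hg : ∀ k, g k ∈ 𝒮) :
    ∫ ω : Fin n → Ω, smx (fun k => AA P X S η e a (g k) ω) ∂(Measure.pi fun _ => P)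
      ≤ 2 * (18 * V / a * (30 + 5 * log (1 + a ^ 2 / 36 * n * (5 / e_m) / V))) := by
  have hb := bayes_cl H.hη.1
  have key := fin_core P (n := n) (V := V) (N := N) hV (wt X S e) (fun ω => 1 - 2 * bayes η (X ω)) H.wt_meas
    (measurable_const.sub ((hb.1.comp H.hX).const_mul 2)) (2 / e_m) (fun ω => (H.wt_bd ω).1)
    (fun ω => (H.wt_bd ω).2) (fun ω => by rcases hb.2 (X ω) with h | h <;> simp [h] <;> norm_num)
    (fun k ω => decide (g k (X ω) ≠ bayes η (X ω))) ?_ ?_ a ha ?_ (5 / e_m) ?_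
  · refine le_trans (le_of_eq ?_) key
    refine integral_congr_ae (Eventually.of_forall fun ω => ?_)
    have e0 : ∀ k x, g k (X x) - bayes η (X x)
        = (1 - 2 * bayes η (X x)) * btB (decide (g k (X x) ≠ bayes η (X x))) := by
      intro k x
      rcases hb.2 (X x) with h | h <;> rcases (h𝒮 _ (hg k)).2 (X x) with h' | h' <;>
        simp [h, h', btB] <;> norm_num
    have e1 : ∀ k x, |g k (X x) - bayes η (X x)| = btB (decide (g k (X x) ≠ bayes η (X x))) := by
      intro k x
      rcases hb.2 (X x) with h | h <;> rcases (h𝒮 _ (hg k)).2 (X x) with h' | h' <;>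
        simp [h, h', btB]
    simp only
    congr 1
    funext k
    unfold AA pl
    refine Finset.sum_congr rfl fun i _ => ?_
    congr 1
    · refine integral_congr_ae (Eventually.of_forall fun x => ?_)
      simp only
      rw [e1, e0]
      ring
    · rw [e0]; ring
  · intro k
    have : Measurable fun x => |g k (X x) - bayes η (X x)| :=
      (((h𝒮 _ (hg k)).1.comp H.hX).sub (hb.1.comp H.hX)).abs
    convert this using 2 with x
    rcases hb.2 (X x) with h | h <;> rcases (h𝒮 _ (hg k)).2 (X x) with h' | h' <;>
        simp [h, h', btB]
  · intro j
    have h1 := hVC.2 fun i => X (j i)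
    unfold Shatters at h1
    push Not at h1
    obtain ⟨c, hc⟩ := h1
    refine ⟨fun i => decide ((if c i then (1 : ℝ) else 0) ≠ bayes η (X (j i))), fun k => ?_⟩
    obtain ⟨i, hi⟩ := hc (g k) (hg k)
    refine ⟨i, fun heq => hi ?_⟩
    rcases hb.2 (X (j i)) with h | h <;> rcases (h𝒮 _ (hg k)).2 (X (j i)) with h' | h' <;>
      cases hci : c i <;> simp_all
  · intro ω
    exact (mul_le_mul_of_nonneg_left (H.wt_bd ω).2 ha.le).trans ha2
  · have := H.wt_sq (fun _ => 1) measurable_const (fun _ => by norm_num)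
    simpa using this

lemma PUSet.AA_lim (H : PUSet P X Y S η e e_m) (a : ℝ) (ha : 0 ≤ a) (g : α → ℝ) (u : ℕ → α → ℝ)
    (hg : IsClassifier g) (hu : ∀ k, IsClassifier (u k))
    (hlim : ∀ p : α × ℝ, Tendsto (fun k => rSAR e (u k) p) atTop (𝓝 (rSAR e g p)))
    {n : ℕ} (ω : Fin n → Ω) :
    Tendsto (fun k => AA P X S η e a (u k) ω) atTop (𝓝 (AA P X S η e a g ω)) := by
  have h1 : ∀ x, Tendsto (fun k => u k x) atTop (𝓝 (g x)) := by
    intro x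
    have := hlim (x, 0)
    have e1 : ∀ f : α → ℝ, IsClassifier f → rSAR e f (x, 0) = f x := by
      intro f hf
      rcases hf.2 x with h | h <;> simp [rSAR, h]
    simpa [e1 _ (hu _), e1 _ hg] using this
  unfold AA
  refine tendsto_finsetSum _ fun i _ => Tendsto.sub ?_ ?_
  · refine tendsto_integral_of_dominated_convergence (fun _ => 2 * (2 / e_m) + a * (2 / e_m) ^ 2)
      (fun k => (H.pl_meas a _ (hu k)).aestronglyMeasurable) (integrable_const _)
      (fun k => Eventually.of_forall fun x => H.pl_bd a ha _ (hu k) x) (Eventually.of_forall fun x => ?_)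
    unfold pl
    have h2 := (h1 (X x)).sub_const (bayes η (X x))
    exact ((h2.mul_const _).const_mul 2).sub (h2.abs.const_mul _)
  · exact (((h1 _).sub_const _).mul_const _).const_mul 2

lemma PUSet.mid (H : PUSet P X Y S η e e_m) (𝒮 𝒮' : Set (α → ℝ)) (h𝒮 : ∀ g ∈ 𝒮, IsClassifier g)
    {V n : ℕ} (hVC : HasVCDim 𝒮 V) (hV : 0 < V) (hn : 0 < n) (hsep : SeparableClass (rSAR e) 𝒮 𝒮')
    (hbay : bayes η ∈ 𝒮) (ghat : (Fin n → Ω) → α → ℝ)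
    (hgh : ∀ ω, ghat ω ∈ 𝒮 ∧
          ∀ g ∈ 𝒮, empRisk (rSAR e) X S n (ghat ω) ω ≤ empRisk (rSAR e) X S n g ω)
    (h : ℝ) (hh0 : 0 < h) (hh1 : h ≤ 1) :
    ∃ F : (Fin n → Ω) → ℝ, Integrable F (Measure.pi fun _ => P) ∧
      ∫ ω, F ω ∂(Measure.pi fun _ => P) ≤ 180 * V / (h * e_m) * (30 + 5 * log (1 + n * h ^ 2 * e_m / V)) ∧
      ∀ ω, n * (2 * excessRisk P X Y η (ghat ω) - h * ∫ x, |ghat ω (X x) - bayes η (X x)| ∂P) ≤ F ω := by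
  have hb := bayes_cl H.hη.1
  have hem := H.hem
  have hVr : (0 : ℝ) < V := by exact_mod_cast hV
  have hnr : (0 : ℝ) < n := by exact_mod_cast hn
  obtain ⟨hsub, hcnt, hdense⟩ := hsep
  have hne : 𝒮'.Nonempty := by
    obtain ⟨u, hu, _⟩ := hdense _ hbay
    exact ⟨u 0, hu 0⟩
  obtain ⟨f, hf⟩ := hcnt.exists_eq_range hne
  have hfS : ∀ k, f k ∈ 𝒮 := fun k => hsub (hf ▸ Set.mem_range_self k)
  set a : ℝ := h * e_m / 5 with ha
  have ha0 : 0 < a := by positivity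
  have ha2 : a * (2 / e_m) ≤ 1 := by
    have : a * (2 / e_m) = 2 * h / 5 := by rw [ha]; field_simp
    linarith
  obtain ⟨F, hF1, hF2, hF3⟩ := sup_lim (Measure.pi fun _ : Fin n => P)
    (fun k ω => AA P X S η e a (f k) ω) (fun k => H.AA_meas a _ (h𝒮 _ (hfS k))) _
    (fun k ω => H.AA_bd a ha0.le _ (h𝒮 _ (hfS k)) ω) _
    (fun N => H.fin_bound 𝒮 h𝒮 hVC hV a ha0 ha2 (fun k : Fin (N + 1) => f k) fun k => hfS k)
  refine ⟨F, hF1, hF2.trans ?_, fun ω => ?_⟩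
  · have e1 : 2 * (18 * V / a * (30 + 5 * log (1 + a ^ 2 / 36 * n * (5 / e_m) / V)))
        = 180 * V / (h * e_m) * (30 + 5 * log (1 + a ^ 2 / 36 * n * (5 / e_m) / V)) := by
      have : 18 * V / a = 90 * V / (h * e_m) := by rw [ha]; field_simp; norm_num
      rw [this]; ring
    rw [e1]
    have e2 : a ^ 2 / 36 * n * (5 / e_m) / V = (n * h ^ 2 * e_m / V) / 180 := by
      rw [ha]; field_simp; norm_num
    rw [e2]
    have : 0 ≤ n * h ^ 2 * e_m / V := by positivity
    have h180 : n * h ^ 2 * e_m / V / 180 ≤ n * h ^ 2 * e_m / V := by linarith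
    have hlog : log (1 + n * h ^ 2 * e_m / V / 180) ≤ log (1 + n * h ^ 2 * e_m / V) :=
      log_le_log (by positivity) (by linarith)
    exact mul_le_mul_of_nonneg_left (by linarith) (by positivity)
  · have hgc := h𝒮 _ (hgh ω).1
    have hAF : AA P X S η e a (ghat ω) ω ≤ F ω := by
      obtain ⟨u, hu, hlim⟩ := hdense _ (hgh ω).1
      refine le_of_tendsto (H.AA_lim a ha0.le _ u hgc (fun k => h𝒮 _ (hsub (hu k))) hlim ω)
        (Eventually.of_forall fun k => ?_)
      have := hu k
      rw [hf] at this
      obtain ⟨j, hj⟩ := this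
      rw [← hj]
      exact hF3 j ω
    refine le_trans ?_ hAF
    have hd : Measurable fun x => ghat ω (X x) - bayes η (X x) :=
      (hgc.1.comp H.hX).sub (hb.1.comp H.hX)
    have i1 : Integrable (fun x => (ghat ω (X x) - bayes η (X x)) * wt X S e x) P := by
      refine bdd_int P _ (2 / e_m) (hd.mul H.wt_meas) fun x => ?_
      rw [abs_mul]
      have h1 := d_abs hgc hb (X x)
      have h2 := (H.wt_bd x).2
      have := abs_nonneg (wt X S e x)
      have := abs_nonneg (ghat ω (X x) - bayes η (X x))
      nlinarith
    have i2 : Integrable (fun x => wt X S e x ^ 2 * |ghat ω (X x) - bayes η (X x)|) P := by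
      refine bdd_int P _ ((2 / e_m) ^ 2) ((H.wt_meas.pow_const 2).mul hd.abs) fun x => ?_
      rw [abs_mul, abs_abs, abs_pow]
      have h1 := d_abs hgc hb (X x)
      have h3 : |wt X S e x| ^ 2 ≤ (2 / e_m) ^ 2 := pow_le_pow_left₀ (abs_nonneg _) (H.wt_bd x).2 2
      have h5 : 0 ≤ |wt X S e x| ^ 2 := by positivity
      nlinarith
    have hpl : ∫ x, pl X S η e a (ghat ω) x ∂P = 2 * excessRisk P X Y η (ghat ω)
        - a * ∫ x, wt X S e x ^ 2 * |ghat ω (X x) - bayes η (X x)| ∂P := by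
      rw [H.excess_eq' _ hgc, ← integral_const_mul, ← integral_const_mul,
        ← integral_sub (i1.const_mul 2) (i2.const_mul a)]
      refine integral_congr_ae (Eventually.of_forall fun x => ?_)
      simp only [pl]; ring
    have hq := H.wt_sq (fun x => |ghat ω x - bayes η x|) (hgc.1.sub hb.1).abs
      (fun x => ⟨abs_nonneg _, d_abs hgc hb x⟩)
    have hq2 : a * ∫ x, wt X S e x ^ 2 * |ghat ω (X x) - bayes η (X x)| ∂P
        ≤ h * ∫ x, |ghat ω (X x) - bayes η (X x)| ∂P := by
      refine (mul_le_mul_of_nonneg_left hq ha0.le).trans (le_of_eq ?_)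
      rw [← mul_assoc]
      congr 1
      rw [ha]; field_simp
    have hemp : ∑ i, (ghat ω (X (ω i)) - bayes η (X (ω i))) * wt X S e (ω i) ≤ 0 := by
      have h1 := (hgh ω).2 _ hbay
      unfold empRisk at h1
      have h2 := le_of_mul_le_mul_left h1 (by positivity)
      rw [← sub_nonpos, ← Finset.sum_sub_distrib] at h2
      refine le_trans (le_of_eq ?_) h2
      refine Finset.sum_congr rfl fun i _ => ?_
      rw [rSAR_sub e _ _ hgc.2 hb.2]
      rfl
    unfold AA
    rw [Finset.sum_sub_distrib, ← Finset.mul_sum, Finset.sum_const, Finset.card_univ, Fintype.card_fin,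
      nsmul_eq_mul, hpl]
    have : (n : ℝ) * (2 * excessRisk P X Y η (ghat ω) - h * ∫ x, |ghat ω (X x) - bayes η (X x)| ∂P)
      ≤ n * (2 * excessRisk P X Y η (ghat ω)
        - a * ∫ x, wt X S e x ^ 2 * |ghat ω (X x) - bayes η (X x)| ∂P) := by
      gcongr
    linarith
end


/-- **Theorem 1 (Upper risk bound for PU learning under SAR assumption).**
There is an absolute constant `κ₁ > 0` such that, for any PU learning setup with a class
`𝒮` of classifiers of finite VC dimension `V` satisfying the separability assumption,
Bayes classifier in `𝒮`, Massart noise margin `h`, and propensity bounded below by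
`e_m > 0`, any minimizer `ghat` of the empirical SAR risk over `𝒮` satisfies
`E[ℓ(ghat, g*)] ≤ κ₁ · min{ (V/(n e_m h))(1 + log(max(n h²/V, 1))), √(V/(n e_m)) }`. -/
theorem risk_upper_bound_PU_SAR :
    ∃ κ₁ : ℝ, 0 < κ₁ ∧
      ∀ (d : ℕ) (Ω : Type) (_ : MeasurableSpace Ω) (P : Measure Ω)
        (_ : IsProbabilityMeasure P)
        (X : Ω → (Fin d → ℝ)) (Y S : Ω → ℝ) (η e : (Fin d → ℝ) → ℝ)
        (𝒮 𝒮' : Set ((Fin d → ℝ) → ℝ)) (V n : ℕ) (h e_m : ℝ)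
        (ghat : (Fin n → Ω) → ((Fin d → ℝ) → ℝ)),
        Measurable X → Measurable Y → Measurable S →
        (∀ᵐ ω ∂P, Y ω = 0 ∨ Y ω = 1) → (∀ᵐ ω ∂P, S ω = 0 ∨ S ω = 1) →
        IsRegression P X Y η → IsPropensity P X Y S e →
        (∀ g ∈ 𝒮, IsClassifier g) →
        HasVCDim 𝒮 V → 0 < V → 0 < n →
        SeparableClass (rSAR e) 𝒮 𝒮' →
        bayes η ∈ 𝒮 →
        0 < h → (∀ x, h ≤ |2 * η x - 1|) →
        0 < e_m → (∀ x, e_m ≤ e x) →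
        (∀ ω, ghat ω ∈ 𝒮 ∧
          ∀ g ∈ 𝒮, empRisk (rSAR e) X S n (ghat ω) ω ≤ empRisk (rSAR e) X S n g ω) →
        ∫ ω, excessRisk P X Y η (ghat ω) ∂(Measure.pi fun _ : Fin n => P) ≤
          κ₁ * min
            ((V : ℝ) / ((n : ℝ) * e_m * h) * (1 + Real.log (max ((n : ℝ) * h ^ 2 / (V : ℝ)) 1)))
            (Real.sqrt ((V : ℝ) / ((n : ℝ) * e_m))) := by
  refine ⟨7000, by norm_num, ?_⟩
  intro d Ω _ P _ X Y S η e 𝒮 𝒮' V n h e_m ghat hX hY hS hY01 hS01 hη he h𝒮 hVC hV hn hsep hbay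
    hh0 hh hem hle hgh
  have H : PUSet P X Y S η e e_m := ⟨hX, hY, hS, hY01, hS01, hη, he, hem, hle⟩
  have hb := bayes_cl hη.1
  have hVr : (0 : ℝ) < V := by exact_mod_cast hV
  have hnr : (0 : ℝ) < n := by exact_mod_cast hn
  have hem1 := H.em_le
  have hh1 : h ≤ 1 := by
    refine (hh 0).trans ?_
    have := hη.2.1 0
    rw [abs_le]; constructor <;> linarith
  have hB0 : ∀ ω, 0 ≤ ∫ x, |ghat ω (X x) - bayes η (X x)| ∂P := fun ω =>
    integral_nonneg fun x => abs_nonneg _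
  have hB1 : ∀ ω, ∫ x, |ghat ω (X x) - bayes η (X x)| ∂P ≤ 1 := fun ω => by
    have hgc := h𝒮 _ (hgh ω).1
    have := integral_mono_of_nonneg (μ := P) (f := fun x => |ghat ω (X x) - bayes η (X x)|)
      (g := fun _ => 1)
      (Eventually.of_forall fun x => abs_nonneg _) (integrable_const (1 : ℝ))
      (Eventually.of_forall fun x => d_abs hgc hb (X x))
    simpa using this
  have hge : ∀ ω, h * ∫ x, |ghat ω (X x) - bayes η (X x)| ∂P ≤ excessRisk P X Y η (ghat ω) := fun ω =>
    H.excess_ge _ (h𝒮 _ (hgh ω).1) h hh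
  have hl0 : ∀ ω, 0 ≤ excessRisk P X Y η (ghat ω) := fun ω =>
    (mul_nonneg hh0.le (hB0 ω)).trans (hge ω)
  have hl1 : ∀ ω, excessRisk P X Y η (ghat ω) ≤ 1 := fun ω => by
    have h1 : risk P X Y (ghat ω) ≤ 1 := measureReal_le_one
    have h2 : 0 ≤ risk P X Y (bayes η) := measureReal_nonneg
    unfold excessRisk
    linarith
  rw [mul_min_of_nonneg _ _ (by norm_num : (0 : ℝ) ≤ 7000)]
  refine le_min ?_ ?_
  · obtain ⟨F, hF1, hF2, hF3⟩ := H.mid 𝒮 𝒮' h𝒮 hVC hV hn hsep hbay ghat hgh h hh0 hh1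
    have h1 : ∫ ω, excessRisk P X Y η (ghat ω) ∂(Measure.pi fun _ : Fin n => P)
        ≤ ∫ ω, F ω / n ∂(Measure.pi fun _ : Fin n => P) := by
      refine integral_mono_of_nonneg (Eventually.of_forall hl0) (hF1.div_const _)
        (Eventually.of_forall fun ω => ?_)
      simp only
      rw [le_div_iff₀ hnr]
      have := hF3 ω
      have := hge ω
      nlinarith
    rw [integral_div] at h1
    refine h1.trans ?_
    rw [div_le_iff₀ hnr]
    refine hF2.trans ?_
    set L := log (max (n * h ^ 2 / V) 1) with hL
    have hL0 : 0 ≤ L := log_nonneg (le_max_right _ _)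
    have hlog : log (1 + n * h ^ 2 * e_m / V) ≤ 1 + L := by
      have hm : 1 + n * h ^ 2 * e_m / V ≤ 2 * max (n * h ^ 2 / V) 1 := by
        have h2 : n * h ^ 2 * e_m / V ≤ n * h ^ 2 / V := by
          refine div_le_div_of_nonneg_right ?_ hVr.le
          exact mul_le_of_le_one_right (by positivity) hem1
        have := le_max_left (n * h ^ 2 / (V : ℝ)) 1
        have := le_max_right (n * h ^ 2 / (V : ℝ)) 1
        linarith
      have h3 := log_le_log (by positivity) hm
      rw [log_mul (by norm_num) (by positivity)] at h3
      have := log_two_lt_d9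
      linarith
    have e1 : 7000 * ((V : ℝ) / (n * e_m * h) * (1 + L)) * n = 180 * V / (h * e_m) * (7000 / 180 * (1 + L)) := by
      field_simp
    rw [e1]
    refine mul_le_mul_of_nonneg_left ?_ (by positivity)
    linarith
  · set r := √((V : ℝ) / (n * e_m)) with hr
    have hr0 : 0 < r := Real.sqrt_pos.2 (by positivity)
    have hrsq : r ^ 2 = V / (n * e_m) := Real.sq_sqrt (by positivity)
    rcases le_or_gt r 1 with hr1 | hr1
    · obtain ⟨F, hF1, hF2, hF3⟩ := H.mid 𝒮 𝒮' h𝒮 hVC hV hn hsep hbay ghat hgh r hr0 hr1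
      have h1 : ∫ ω, excessRisk P X Y η (ghat ω) ∂(Measure.pi fun _ : Fin n => P)
          ≤ ∫ ω, (F ω / n + r) ∂(Measure.pi fun _ : Fin n => P) := by
        refine integral_mono_of_nonneg (Eventually.of_forall hl0) ((hF1.div_const _).add (integrable_const _))
          (Eventually.of_forall fun ω => ?_)
        simp only
        have h2 : 2 * excessRisk P X Y η (ghat ω) - r * ∫ x, |ghat ω (X x) - bayes η (X x)| ∂P ≤ F ω / n := by
          rw [le_div_iff₀ hnr, mul_comm]
          exact hF3 ω
        have := hl0 ω
        have := hB1 ω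
        nlinarith
      rw [integral_add (hF1.div_const _) (integrable_const _), integral_div] at h1
      simp only [integral_const, probReal_univ, one_smul] at h1
      have e1 : (n : ℝ) * r ^ 2 * e_m / V = 1 := by rw [hrsq]; field_simp
      have e2 : (V : ℝ) = n * e_m * r ^ 2 := by rw [hrsq]; field_simp
      rw [e1] at hF2
      have e3 : 180 * (V : ℝ) / (r * e_m) = 180 * r * n := by rw [e2]; field_simp
      rw [e3] at hF2
      have h3 : (∫ ω, F ω ∂(Measure.pi fun _ : Fin n => P)) / n ≤ 180 * r * 35 := by
        rw [div_le_iff₀ hnr]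
        refine hF2.trans ?_
        have h4 : log (1 + 1) ≤ 1 := by
          have := log_two_lt_d9
          rw [one_add_one_eq_two]
          linarith
        have : 180 * r * n * (30 + 5 * log (1 + 1)) ≤ 180 * r * n * 35 :=
          mul_le_mul_of_nonneg_left (by linarith) (by positivity)
        linarith
      linarith
    · have h1 : ∫ ω, excessRisk P X Y η (ghat ω) ∂(Measure.pi fun _ : Fin n => P)
          ≤ ∫ ω, 1 ∂(Measure.pi fun _ : Fin n => P) :=
        integral_mono_of_nonneg (Eventually.of_forall hl0) (integrable_const _) (Eventually.of_forall hl1)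
      simp only [integral_const, probReal_univ, one_smul] at h1
      linarith
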